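/- arXiv:2201.04062 — 2 statements merged into one kernel-verified Lean document; each statement's English description precedes it below -/
import Mathlib

section
/- Let K≥k≥1 be integers, let c>0 with K ≥ (2+1/c)(k−1), let ε,α>0, let B=(B_i : i∈I) be a blockade of length K in a graph G, and let A ⊆ V(G)∖∪_{i∈I}B_i cover ∪_{i∈I}B_i. Suppose that for each i∈I, the max-degree from A to B_i is less than ε|B_i|. Suppose also that there is no partition P of A into at most K^k sets such that for each X∈P there exists J⊆I with |J|=k where |N(X)∩B_j| < K^k·α·|B_j| for each j∈J. Then there exist X⊆A and J⊆I with |J|=k such that |G|^{-c}·α ≤ |N(X)∩B_i|/|B_i| < K^k·α + ε for each i∈J. -/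
noncomputable section

namespace PurePairs

open SimpleGraph

variable {V W : Type*}

/-- A pure pair in `G`: a pair of disjoint vertex sets that are complete
or anticomplete to each other. -/
def PurePair (G : SimpleGraph V) (A B : Set V) : Prop :=
  Disjoint A B ∧
    ((∀ a ∈ A, ∀ b ∈ B, G.Adj a b) ∨ (∀ a ∈ A, ∀ b ∈ B, ¬ G.Adj a b))

/-- `G` contains `H`: some induced subgraph of `G` is isomorphic to `H`. -/
def Contains (G : SimpleGraph V) (H : SimpleGraph W) : Prop :=
  Nonempty (H ↪g G)

/-- The congestion of a graph `H`: the maximum (here: supremum, together with `0`)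
of `1 - (|J|-1)/|E(J)|` over all subgraphs `J` of `H` with at least one edge.
If `H` has no edges this is `0`. -/
def congestion (H : SimpleGraph V) : ℝ :=
  sSup ({0} ∪ {x : ℝ | ∃ J : H.Subgraph, J.edgeSet.Nonempty ∧
    x = 1 - ((J.verts.ncard : ℝ) - 1) / (J.edgeSet.ncard : ℝ)})

/-- `A` is anticomplete to `B`: no edges between them. -/
def Anticomplete (G : SimpleGraph V) (A B : Set V) : Prop :=
  ∀ a ∈ A, ∀ b ∈ B, ¬ G.Adj a b

/-- `A` covers `B`: every vertex of `B` has a neighbour in `A`. -/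
def Covers (G : SimpleGraph V) (A B : Set V) : Prop :=
  ∀ b ∈ B, ∃ a ∈ A, G.Adj a b

/-- `G` is `ε`-sparse: every vertex has degree less than `ε|G|`. -/
def EpsSparse (G : SimpleGraph V) [Fintype V] (ε : ℝ) : Prop :=
  ∀ v : V, ((G.neighborSet v).ncard : ℝ) < ε * (Fintype.card V : ℝ)

/-- `G` is `(γ,δ)`-coherent: there is no pair of disjoint anticomplete sets `A`, `B`
with `|A| ≥ γ` and `|B| ≥ δ`. -/
def Coherent (G : SimpleGraph V) (γ δ : ℝ) : Prop :=
  ¬ ∃ A B : Set V, Disjoint A B ∧ Anticomplete G A B ∧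
      γ ≤ (A.ncard : ℝ) ∧ δ ≤ (B.ncard : ℝ)

/-- `N(X)`: the set of vertices with a neighbour in `X`. -/
def nbhd (G : SimpleGraph V) (X : Set V) : Set V :=
  {v | ∃ x ∈ X, G.Adj x v}

/-- A blockade: a family of nonempty pairwise disjoint vertex sets indexed by a
finite set of integers. -/
def IsBlockade (I : Finset ℤ) (A : ℤ → Set V) : Prop :=
  (∀ i ∈ I, (A i).Nonempty) ∧
    ∀ i ∈ I, ∀ j ∈ I, i ≠ j → Disjoint (A i) (A j)

/-- The blockade `(A i : i ∈ I)` is `(γ,δ)`-divergent. -/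
def Divergent (G : SimpleGraph V) (I : Finset ℤ) (A : ℤ → Set V) (γ δ : ℝ) : Prop :=
  ∃ i ∈ I, ∃ j ∈ I, i ≠ j ∧ ∃ X ⊆ A i, ∃ Y ⊆ A j,
    γ * ((A i).ncard : ℝ) ≤ (X.ncard : ℝ) ∧ δ * ((A j).ncard : ℝ) ≤ (Y.ncard : ℝ) ∧
    Anticomplete G X Y

/-- The blockade `(A i : i ∈ I)` is `τ`-expanding. -/
def Expanding (G : SimpleGraph V) (I : Finset ℤ) (A : ℤ → Set V) (τ : ℝ) : Prop :=
  ∀ i ∈ I, ∀ j ∈ I, i ≠ j → ∀ X ⊆ A i,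
    min (τ * (X.ncard : ℝ) / ((A i).ncard : ℝ)) (1/4)
      ≤ (((nbhd G X) ∩ A j).ncard : ℝ) / ((A j).ncard : ℝ)

/-- The linkage of the blockade `(A i : i ∈ I)` is at most `lam`. -/
def LinkageLE (G : SimpleGraph V) (I : Finset ℤ) (A : ℤ → Set V) (lam : ℝ) : Prop :=
  ∀ i ∈ I, ∀ j ∈ I, i ≠ j → ∀ v ∈ A i,
    ((G.neighborSet v ∩ A j).ncard : ℝ) ≤ lam * ((A j).ncard : ℝ)

/-- The shrinkage of the blockade `(A i : i ∈ I)` is at most `σ`, i.e. its width is at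
least `|G|^{1-σ}`. -/
def ShrinkageLE [Fintype V] (I : Finset ℤ) (A : ℤ → Set V) (σ : ℝ) : Prop :=
  ∀ i ∈ I, (Fintype.card V : ℝ) ^ (1 - σ) ≤ ((A i).ncard : ℝ)

/-- `(L 0, …, L k)` is a levelling in `G`. -/
def IsLevelling (G : SimpleGraph V) (L : ℕ → Set V) (k : ℕ) : Prop :=
  1 ≤ k ∧ (L 0).ncard = 1 ∧
  (∀ i ≤ k, ∀ j ≤ k, i ≠ j → Disjoint (L i) (L j)) ∧
  (∀ i, 1 ≤ i → i ≤ k → Covers G (L (i-1)) (L i)) ∧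
  (∀ i, 2 ≤ i → i ≤ k → ∀ h, h + 2 ≤ i → Anticomplete G (L h) (L i))

/-- The levelling `(L 0, …, L k)` reaches `C`, i.e. `(L 0, …, L k, C)` is a levelling. -/
def Reaches (G : SimpleGraph V) (L : ℕ → Set V) (k : ℕ) (C : Set V) : Prop :=
  IsLevelling G (fun i => if i = k + 1 then C else L i) (k + 1)

/-- The levelling `(L 0, …, L k)` is `(B i : i ∈ I)`-rainbow. -/
def RainbowLevelling (I : Finset ℤ) (B : ℤ → Set V) (L : ℕ → Set V) (k : ℕ) : Prop :=
  ∃ q : ℕ → ℤ, (∀ i ≤ k, q i ∈ I ∧ L i ⊆ B (q i)) ∧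
    ∀ i ≤ k, ∀ j ≤ k, q i = q j → i = j

/-- The levelling `(L 0, …, L k)` grades the blockade `(C j : j ∈ J)` (in some order). -/
def Grades (G : SimpleGraph V) (L : ℕ → Set V) (k : ℕ) (J : Finset ℤ) (C : ℤ → Set V) :
    Prop :=
  Reaches G L k (⋃ j ∈ J, C j) ∧
  ∃ e : ℕ → ℤ, (∀ g < J.card, e g ∈ J) ∧
    (∀ g < J.card, ∀ h < J.card, e g = e h → g = h) ∧
    ∀ g < J.card, ∃ Y ⊆ L k,
      (∀ h, g ≤ h → h < J.card → Covers G Y (C (e h))) ∧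
      (∀ h, h < g → Anticomplete G Y (C (e h)))

/-- The levelling `(L 0, …, L k)` grades the blockade `(C j : j ∈ J)` forwards. -/
def GradesFwd (G : SimpleGraph V) (L : ℕ → Set V) (k : ℕ) (J : Finset ℤ) (C : ℤ → Set V) :
    Prop :=
  Reaches G L k (⋃ j ∈ J, C j) ∧
  ∀ j ∈ J, ∃ Y ⊆ L k,
    (∀ i ∈ J, j ≤ i → Covers G Y (C i)) ∧
    (∀ i ∈ J, i < j → Anticomplete G Y (C i))

/-- The levelling `(L 0, …, L k)` grades the blockade `(C j : j ∈ J)` backwards. -/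
def GradesBwd (G : SimpleGraph V) (L : ℕ → Set V) (k : ℕ) (J : Finset ℤ) (C : ℤ → Set V) :
    Prop :=
  Reaches G L k (⋃ j ∈ J, C j) ∧
  ∀ j ∈ J, ∃ Y ⊆ L k,
    (∀ i ∈ J, i ≤ j → Covers G Y (C i)) ∧
    (∀ i ∈ J, j < i → Anticomplete G Y (C i))

/-- Two levellings are parallel. -/
def Parallel (G : SimpleGraph V) (L : ℕ → Set V) (k : ℕ) (M : ℕ → Set V) (m : ℕ) : Prop :=
  L 0 = M 0 ∧
  Disjoint (⋃ j ∈ Finset.Icc 1 m, M j) (⋃ i ∈ Finset.Icc 1 k, L i) ∧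
  Anticomplete G (⋃ j ∈ Finset.Icc 1 m, M j) (⋃ i ∈ Finset.Icc 1 k, L i)

/-- `(L, M, C)` is a bi-levelling, where `L` has height `k` and `M` has height `m`:
`C` is a blockade, `L, M` are parallel levellings both reaching the union of the
blocks of `C`, and `L` grades `C` forwards. Its height is `k + m` and its length is
the length of `C`. -/
def IsBiLevelling (G : SimpleGraph V) (L : ℕ → Set V) (k : ℕ) (M : ℕ → Set V) (m : ℕ)
    (J : Finset ℤ) (C : ℤ → Set V) : Prop :=
  IsBlockade J C ∧ IsLevelling G L k ∧ IsLevelling G M m ∧ Parallel G L k M m ∧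
    Reaches G M m (⋃ j ∈ J, C j) ∧ GradesFwd G L k J C

/-- A bi-grading: a bi-levelling in which `M` also grades `C` backwards. -/
def IsBiGrading (G : SimpleGraph V) (L : ℕ → Set V) (k : ℕ) (M : ℕ → Set V) (m : ℕ)
    (J : Finset ℤ) (C : ℤ → Set V) : Prop :=
  IsBiLevelling G L k M m J C ∧ GradesBwd G M m J C

/-- The bi-levelling `(L, M, C)` is `(A i : i ∈ I)`-rainbow: each block of `C`, each
level of `L`, and each level of `M` other than `M 0 = L 0` is included in a block of
`A`, and distinct such sets lie in distinct blocks. -/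
def RainbowBiLevelling (I : Finset ℤ) (A : ℤ → Set V)
    (L : ℕ → Set V) (k : ℕ) (M : ℕ → Set V) (m : ℕ)
    (J : Finset ℤ) (C : ℤ → Set V) : Prop :=
  ∃ (qc : ℤ → ℤ) (ql qm : ℕ → ℤ),
    (∀ j ∈ J, qc j ∈ I ∧ C j ⊆ A (qc j)) ∧
    (∀ i ≤ k, ql i ∈ I ∧ L i ⊆ A (ql i)) ∧
    (∀ i, 1 ≤ i → i ≤ m → qm i ∈ I ∧ M i ⊆ A (qm i)) ∧
    (∀ j ∈ J, ∀ j' ∈ J, qc j = qc j' → j = j') ∧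
    (∀ i ≤ k, ∀ i' ≤ k, ql i = ql i' → i = i') ∧
    (∀ i, 1 ≤ i → i ≤ m → ∀ i', 1 ≤ i' → i' ≤ m → qm i = qm i' → i = i') ∧
    (∀ j ∈ J, ∀ i ≤ k, qc j ≠ ql i) ∧
    (∀ j ∈ J, ∀ i, 1 ≤ i → i ≤ m → qc j ≠ qm i) ∧
    (∀ i ≤ k, ∀ i', 1 ≤ i' → i' ≤ m → ql i ≠ qm i')

/-- Each block of `(C j : j ∈ J)` lies in a block of `(A i : i ∈ I)`; the `A`-size of
`C` is at least `η` when every block of `C` has size at least `η` times the size of the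
block of `A` containing it. -/
def SizeGE (I : Finset ℤ) (A : ℤ → Set V) (J : Finset ℤ) (C : ℤ → Set V) (η : ℝ) : Prop :=
  ∀ j ∈ J, ∀ i ∈ I, C j ⊆ A i → η * ((A i).ncard : ℝ) ≤ ((C j).ncard : ℝ)

/-- A `(B i : i ∈ I)`-rainbow induced path `p 0 - p 1 - ⋯ - p n` in `G`. -/
def RainbowPath (G : SimpleGraph V) (I : Finset ℤ) (B : ℤ → Set V)
    (n : ℕ) (p : ℕ → V) : Prop :=
  (∀ i ≤ n, ∀ j ≤ n, p i = p j → i = j) ∧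
  (∀ i < n, G.Adj (p i) (p (i+1))) ∧
  (∀ i j, i + 1 < j → j ≤ n → ¬ G.Adj (p i) (p j)) ∧
  ∃ q : ℕ → ℤ, (∀ i ≤ n, q i ∈ I ∧ p i ∈ B (q i)) ∧
    ∀ i ≤ n, ∀ j ≤ n, q i = q j → i = j

/-- A `(B i : i ∈ I)`-rainbow copy of `H` in `G`: an induced copy of `H` with each
vertex in a different block. -/
def RainbowCopy (G : SimpleGraph V) (I : Finset ℤ) (B : ℤ → Set V)
    (H : SimpleGraph W) : Prop :=
  ∃ (f : H ↪g G) (q : W → ℤ), Function.Injective q ∧ ∀ w : W, q w ∈ I ∧ f w ∈ B (q w)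

/-- `(N,K,σ,lam,c)` forces `H`. -/
def Forces (H : SimpleGraph W) (N K : ℕ) (σ lam c : ℝ) : Prop :=
  ∀ {V : Type} [Fintype V] (G : SimpleGraph V),
    Coherent G ((Fintype.card V : ℝ) ^ (1 - c)) ((Fintype.card V : ℝ) ^ (1 - c)) →
    N ≤ Fintype.card V →
    ∀ (I : Finset ℤ) (A : ℤ → Set V), IsBlockade I A → I.card = K →
      ShrinkageLE I A σ → LinkageLE G I A lam →
      RainbowCopy G I A H

/-- `p 0 - ⋯ - p n` is a handle of length `n` that can be added to (the graph induced
on) `S` inside the ambient graph `H`: an induced path of `H[S ∪ p]` of length at least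
two whose ends lie in `S`, whose internal vertices avoid `S` and have degree two in
`H[S ∪ p]`. -/
def IsHandle (H : SimpleGraph V) (S : Set V) (n : ℕ) (p : ℕ → V) : Prop :=
  2 ≤ n ∧
  (∀ i ≤ n, ∀ j ≤ n, p i = p j → i = j) ∧
  p 0 ∈ S ∧ p n ∈ S ∧
  (∀ i, 0 < i → i < n → p i ∉ S) ∧
  (∀ i < n, H.Adj (p i) (p (i+1))) ∧
  (∀ i j, i + 1 < j → j ≤ n → ¬ H.Adj (p i) (p j)) ∧
  (∀ i, 0 < i → i < n → ∀ w, (w ∈ S ∨ ∃ j ≤ n, w = p j) → H.Adj (p i) w →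
    w = p (i-1) ∨ w = p (i+1))

/-- The vertex sets `S` such that the induced subgraph `H[S]` can be built, starting
from the two-vertex graph with no edges, by repeatedly adding handles of length at
least `β`. -/
inductive BuildableOn (H : SimpleGraph V) (β : ℕ) : Set V → Prop
  | base (u v : V) (huv : u ≠ v) (hadj : ¬ H.Adj u v) : BuildableOn H β {u, v}
  | handle (S : Set V) (n : ℕ) (p : ℕ → V) (hS : BuildableOn H β S)
      (hh : IsHandle H S n p) (hn : β ≤ n) :
      BuildableOn H β (S ∪ {w | ∃ j ≤ n, w = p j})

/-- `H` is `β`-buildable. -/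
def Buildable [Fintype V] (H : SimpleGraph V) (β : ℕ) : Prop :=
  BuildableOn H β Set.univ

/-- The vertex sets `S` such that the induced subgraph `H[S]` can be built, starting
from the null graph, by repeatedly adding a subleaf or a handle of length at least
`β`. -/
inductive WeaklyBuildableOn (H : SimpleGraph V) (β : ℕ) : Set V → Prop
  | empty : WeaklyBuildableOn H β ∅
  | subleaf (S : Set V) (v : V) (hv : v ∉ S) (hdeg : (S ∩ H.neighborSet v).ncard ≤ 1)
      (hS : WeaklyBuildableOn H β S) : WeaklyBuildableOn H β (insert v S)
  | handle (S : Set V) (n : ℕ) (p : ℕ → V) (hS : WeaklyBuildableOn H β S)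
      (hh : IsHandle H S n p) (hn : β ≤ n) :
      WeaklyBuildableOn H β (S ∪ {w | ∃ j ≤ n, w = p j})

/-- `H` is weakly `β`-buildable. -/
def WeaklyBuildable [Fintype V] (H : SimpleGraph V) (β : ℕ) : Prop :=
  WeaklyBuildableOn H β Set.univ

/-!
Write `d(X, C) = |N(X) ∩ C| / |C|`. If some `v ∈ A` satisfies `d({v}, B_i) ≥ |G|^{-c} α` for at
least `k` indices `i`, take `X = {v}`. Otherwise classify each `v ∈ A` by the set of these indices;
there are at most `K^k` classes, so some class `A'` has `d(A', B_i) ≥ K^k α` for all but at most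
`k - 1` indices. Discarding these indices and the at most `k - 1` defining the class leaves at least
`(k - 1) / c` indices `i` for which every vertex of `A'` covers less than `|G|^{-c} α` of `B_i`.
For such `i` let `X_i ⊆ A'` be a smallest set with `d(X_i, B_i) ≥ α`; then
`|G|^c < |X_i| ≤ |G|`. By the pigeonhole principle `k` of these sizes lie within a factor `|G|^c`
of each other. Averaging trims each `X_i` to a set `Y_i` of the least of the `k` sizes,
with `d(Y_i, B_i) ≥ |G|^{-c} α`, while minimality of `X_j` keeps `d(Y_i, B_j)` only slightly above
`α`. The union of the sets `Y_i` is the required `X`.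
-/

section Finset

variable {ι β : Type*}

theorem exists_mem_mul_card_biUnion_le_card_biUnion_erase [DecidableEq ι] [DecidableEq β]
    {s : Finset ι} {m : ℕ} (hs : s.card = m + 1) (t : ι → Finset β) :
    ∃ i ∈ s, m * (s.biUnion t).card ≤ (m + 1) * ((s.erase i).biUnion t).card := by
  let priv : ι → Finset β := fun i => s.biUnion t \ (s.erase i).biUnion t
  have hdisj : (s : Set ι).PairwiseDisjoint priv := by
    intro i _ j _ hij
    simp only [Function.onFun, priv, Finset.disjoint_left, Finset.mem_sdiff, Finset.mem_biUnion,
      Finset.mem_erase]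
    grind
  have hsum : ∑ i ∈ s, (priv i).card ≤ (s.biUnion t).card := by
    rw [← Finset.card_biUnion hdisj]
    exact Finset.card_le_card (Finset.biUnion_subset.2 fun i _ => Finset.sdiff_subset)
  obtain ⟨i, hi, hmin⟩ := Finset.exists_min_image s (fun i => (priv i).card)
    (Finset.card_pos.1 (by lia))
  have hpriv : (m + 1) * (priv i).card ≤ (s.biUnion t).card := by
    simpa [hs] using (Finset.card_nsmul_le_sum s _ _ hmin).trans hsum
  have hsplit : (priv i).card + ((s.erase i).biUnion t).card = (s.biUnion t).card :=
    Finset.card_sdiff_add_card_eq_card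
      (Finset.biUnion_subset_biUnion_of_subset_left t (Finset.erase_subset i s))
  exact ⟨i, hi, by nlinarith⟩

theorem exists_subset_card_eq_mul_card_biUnion_le [DecidableEq β] (s : Finset ι) (t : ι → Finset β)
    {m : ℕ} (hm : m ≤ s.card) :
    ∃ u ⊆ s, u.card = m ∧ m * (s.biUnion t).card ≤ s.card * (u.biUnion t).card := by
  classical
  induction hm using Nat.decreasingInduction with
  | self => exact ⟨s, subset_rfl, rfl, le_rfl⟩
  | of_succ m _ ih =>
    obtain ⟨u, hus, hu, havg⟩ := ih
    obtain ⟨i, hi, herase⟩ := exists_mem_mul_card_biUnion_le_card_biUnion_erase hu t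
    refine ⟨u.erase i, (u.erase_subset i).trans hus, by grind, ?_⟩
    refine Nat.le_of_mul_le_mul_left (c := m + 1) ?_ m.succ_pos
    calc (m + 1) * (m * (s.biUnion t).card)
        = m * ((m + 1) * (s.biUnion t).card) := by ring
      _ ≤ m * (s.card * (u.biUnion t).card) := by gcongr
      _ = s.card * (m * (u.biUnion t).card) := by ring
      _ ≤ s.card * ((m + 1) * ((u.erase i).biUnion t).card) := by gcongr
      _ = (m + 1) * (s.card * ((u.erase i).biUnion t).card) := by ring

theorem card_powerset_filter_card_lt_le_pow (I : Finset ι) {k : ℕ} (hk : 1 ≤ k)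
    (hkI : k ≤ I.card) : (I.powerset.filter (·.card < k)).card ≤ I.card ^ k := by
  classical
  have hsub : I.powerset.filter (·.card < k) ⊆ (Finset.range k).biUnion I.powersetCard := by
    intro D
    simp +contextual
  have hsum : (I.powerset.filter (·.card < k)).card ≤ ∑ j ∈ Finset.range k, I.card ^ j :=
    calc _ ≤ ((Finset.range k).biUnion I.powersetCard).card := Finset.card_le_card hsub
      _ ≤ ∑ j ∈ Finset.range k, (I.powersetCard j).card := Finset.card_biUnion_le
      _ ≤ ∑ j ∈ Finset.range k, I.card ^ j := Finset.sum_le_sum fun j _ => by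
        simpa using Nat.choose_le_pow I.card j
  obtain hI | hI := (hk.trans hkI).eq_or_lt
  · obtain rfl : k = 1 := by lia
    simpa [← hI] using hsum
  · exact hsum.trans (Nat.geomSum_lt hI fun j hj => Finset.mem_range.1 hj).le

theorem ceil_sub_one_mul_lt_card_sdiff_union [DecidableEq ι] {I s t : Finset ι} {k : ℕ} {r : ℝ}
    (hr : 0 < r) (hs : s.card < k) (ht : t.card < k) (hkI : k ≤ I.card)
    (hI : (2 + r) * ((k : ℝ) - 1) ≤ I.card) :
    (⌈r⌉ - 1).toNat * (k - 1) < (I \ (s ∪ t)).card := by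
  obtain ⟨l, rfl⟩ : ∃ l, k = l + 1 := ⟨k - 1, by lia⟩
  have hcard : I.card ≤ (I \ (s ∪ t)).card + 2 * l := by
    have hsdiff := Finset.le_card_sdiff (s ∪ t) I
    have hunion := Finset.card_union_le s t
    lia
  obtain rfl | hl := Nat.eq_zero_or_pos l
  · simp only [zero_add, tsub_self, mul_zero]
    lia
  have hceil : (((⌈r⌉ - 1).toNat : ℤ) : ℝ) < r := by
    rw [Int.toNat_of_nonneg (by have := Int.ceil_pos.2 hr; lia)]
    push_cast
    linarith [Int.ceil_lt_add_one r]
  have hcardR : (I.card : ℝ) ≤ (I \ (s ∪ t)).card + 2 * l := by exact_mod_cast hcard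
  have hlR : (0 : ℝ) < l := by exact_mod_cast hl
  rw [add_tsub_cancel_right, ← Nat.cast_lt (α := ℝ)]
  push_cast at hceil hI ⊢
  nlinarith

end Finset

theorem exists_subset_card_eq_forall_mem_Ico {ι R : Type*} [LinearOrder R] {I : Finset ι}
    {f : ι → R} {a b : R} {k : ℕ} (hk : k ≤ {i ∈ I | a ≤ f i}.card) (hb : ∀ i ∈ I, f i < b) :
    ∃ J ⊆ I, J.card = k ∧ ∀ i ∈ J, f i ∈ Set.Ico a b := by
  obtain ⟨J, hJ, hJk⟩ := Finset.exists_subset_card_eq hk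
  have hJ' : ∀ i ∈ J, i ∈ I ∧ a ≤ f i := fun i hi => Finset.mem_filter.1 (hJ hi)
  exact ⟨J, fun i hi => (hJ' i hi).1, hJk, fun i hi => ⟨(hJ' i hi).2, hb i (hJ' i hi).1⟩⟩

theorem exists_subset_card_eq_forall_le_mul {ι R : Type*} [Field R] [LinearOrder R]
    [IsStrictOrderedRing R] [Archimedean R] {T : Finset ι} {m : ι → R} {q : R} {a b : ℤ} {k : ℕ}
    (hq : 1 < q) (hm : ∀ i ∈ T, m i ∈ Set.Ioc (q ^ a) (q ^ b))
    (hT : (b - a).toNat * (k - 1) < T.card) :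
    ∃ J ⊆ T, J.card = k ∧ ∀ i ∈ J, ∀ j ∈ J, m i ≤ q * m j := by
  have hq0 : 0 < q := zero_lt_one.trans hq
  have hscale : ∀ i ∈ T, ∃ e : ℤ, m i ∈ Set.Ioc (q ^ e) (q ^ (e + 1)) := fun i hi =>
    exists_mem_Ioc_zpow ((zpow_pos hq0 a).trans (hm i hi).1) hq
  choose! e he using hscale
  have hmaps : ∀ i ∈ T, e i ∈ Finset.Ico a b := by
    intro i hi
    have ha : a < e i + 1 := (zpow_lt_zpow_iff_right₀ hq).1 ((hm i hi).1.trans_le (he i hi).2)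
    have hb : e i < b := (zpow_lt_zpow_iff_right₀ hq).1 ((he i hi).1.trans_le (hm i hi).2)
    exact Finset.mem_Ico.2 ⟨Int.lt_add_one_iff.1 ha, hb⟩
  obtain ⟨t, -, ht⟩ :=
    Finset.exists_lt_card_fiber_of_mul_lt_card_of_maps_to hmaps (by rwa [Int.card_Ico])
  obtain ⟨J, hJ, hJk⟩ := Finset.exists_subset_card_eq (Nat.le_of_pred_lt ht)
  refine ⟨J, hJ.trans (Finset.filter_subset _ _), hJk, fun i hi j hj => ?_⟩
  obtain ⟨hiT, hit⟩ := Finset.mem_filter.1 (hJ hi)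
  obtain ⟨hjT, hjt⟩ := Finset.mem_filter.1 (hJ hj)
  calc m i ≤ q ^ (t + 1) := hit ▸ (he i hiT).2
    _ = q * q ^ t := zpow_one_add₀ hq0.ne' t ▸ by rw [add_comm]
    _ ≤ q * m j := by
      gcongr
      exact hjt ▸ (he j hjT).1.le

theorem exists_subset_card_eq_forall_card_le_rpow_mul {ι : Type*} [Fintype V] {T : Finset ι}
    {X : ι → Finset V} {c : ℝ} {k : ℕ} (hc : 0 < c)
    (hX : ∀ i ∈ T, (Fintype.card V : ℝ) ^ c < (X i).card)
    (hT : (⌈1 / c⌉ - 1).toNat * (k - 1) < T.card) :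
    ∃ J ⊆ T, J.card = k ∧
      ∀ i ∈ J, ∀ j ∈ J, ((X i).card : ℝ) ≤ (Fintype.card V : ℝ) ^ c * (X j).card := by
  set n : ℝ := (Fintype.card V : ℝ)
  have hXn (i : ι) : ((X i).card : ℝ) ≤ n := Nat.cast_le.2 (X i).card_le_univ
  obtain ⟨i₀, hi₀⟩ : T.Nonempty := Finset.card_pos.1 (by lia)
  have hn1 : 1 < n := by
    have hlt : n ^ c < n := (hX i₀ hi₀).trans_le (hXn i₀)
    have hpos : 0 < n := (by positivity : 0 ≤ n ^ c).trans_lt hlt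
    have hge : 1 ≤ n := Nat.one_le_cast.2 (Nat.cast_pos.1 hpos)
    exact hge.lt_of_ne fun h => by simp [← h] at hlt
  have hpow : n ≤ (n ^ c) ^ ⌈1 / c⌉ := by
    rw [← Real.rpow_intCast, ← Real.rpow_mul (by positivity)]
    refine Real.self_le_rpow_of_one_le hn1.le ?_
    calc 1 = c * (1 / c) := by field_simp
      _ ≤ c * ⌈1 / c⌉ := by gcongr; exact Int.le_ceil _
  exact exists_subset_card_eq_forall_le_mul (a := 1) (b := ⌈1 / c⌉) (Real.one_lt_rpow hn1 hc)
    (fun i hi => ⟨by simpa using hX i hi, (hXn i).trans hpow⟩) hT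

/-- `A` is the disjoint union of at most `N` sets satisfying `Q`. The parts are enumerated by an
initial segment of `ℕ` and may be empty. -/
def IsPartitionableInto (N : ℕ) (Q : Set V → Prop) (A : Set V) : Prop :=
  ∃ (n : ℕ) (f : ℕ → Set V), n ≤ N ∧ (∀ t < n, f t ⊆ A) ∧
    (∀ s < n, ∀ t < n, s ≠ t → Disjoint (f s) (f t)) ∧
    (A ⊆ ⋃ t ∈ Finset.range n, f t) ∧ ∀ t < n, Q (f t)

theorem IsPartitionableInto.mono {N : ℕ} {P Q : Set V → Prop} {A : Set V}
    (h : IsPartitionableInto N P A) (hPQ : ∀ X, P X → Q X) : IsPartitionableInto N Q A := by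
  obtain ⟨n, f, hn, hfA, hdisj, hcover, hP⟩ := h
  exact ⟨n, f, hn, hfA, hdisj, hcover, fun t ht => hPQ _ (hP t ht)⟩

theorem isPartitionableInto_of_fibers {γ : Type*} {N : ℕ} {Q : Set V → Prop} {A : Set V}
    {D : V → γ} {F : Finset γ} (hN : F.card ≤ N) (hD : ∀ v ∈ A, D v ∈ F)
    (hQ : ∀ s ∈ F, Q {v ∈ A | D v = s}) : IsPartitionableInto N Q A := by
  obtain ⟨e, he⟩ : ∃ e : γ → ℕ, Set.BijOn e F (Finset.range F.card) :=
    F.finite_toSet.exists_bijOn_of_encard_eq <| by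
      simp only [Set.encard_coe_eq_coe_finsetCard, Finset.card_range]
  refine ⟨F.card, fun t => {v ∈ A | e (D v) = t}, hN, fun t _ => Set.sep_subset A _,
    fun s _ t _ hst => ?_, fun v hv => ?_, fun t ht => ?_⟩
  · exact Set.disjoint_left.2 fun v hs ht => hst (hs.2.symm.trans ht.2)
  · exact Set.mem_biUnion (he.mapsTo (hD v hv)) ⟨hv, rfl⟩
  · obtain ⟨s, hs, rfl⟩ := he.surjOn (Finset.mem_coe.2 (Finset.mem_range.2 ht))
    convert hQ s hs using 1
    ext v
    exact and_congr_right fun hv => he.injOn.eq_iff (hD v hv) hs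

section CoverDensity

variable {G : SimpleGraph V} {C X Y : Set V}

/-- The proportion `|N(X) ∩ C| / |C|` of the vertices of `C` that have a neighbour in `X`;
it is `0` when `C` is empty. -/
def coverDensity (G : SimpleGraph V) (X C : Set V) : ℝ :=
  ((nbhd G X ∩ C).ncard : ℝ) / (C.ncard : ℝ)

theorem nbhd_eq_biUnion (X : Set V) : nbhd G X = ⋃ v ∈ X, G.neighborSet v := by
  ext u
  simp [nbhd]

@[simp]
theorem coverDensity_empty : coverDensity G ∅ C = 0 := by
  simp [coverDensity, nbhd_eq_biUnion]

theorem coverDensity_nonneg : 0 ≤ coverDensity G X C := by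
  unfold coverDensity
  positivity

theorem coverDensity_union_le (X Y : Set V) :
    coverDensity G (X ∪ Y) C ≤ coverDensity G X C + coverDensity G Y C := by
  simp only [coverDensity, nbhd_eq_biUnion, Set.biUnion_union, Set.union_inter_distrib_right]
  rw [← add_div]
  gcongr
  exact_mod_cast Set.ncard_union_le _ _

theorem coverDensity_biUnion_le {ι : Type*} (J : Finset ι) (Y : ι → Set V) :
    coverDensity G (⋃ i ∈ J, Y i) C ≤ ∑ i ∈ J, coverDensity G (Y i) C :=
  J.apply_union_le_sum (f := fun X => coverDensity G X C) coverDensity_empty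
    (coverDensity_union_le _ _)

variable [Finite V]

theorem coverDensity_lt_iff (hC : C.Nonempty) {a : ℝ} :
    coverDensity G X C < a ↔ ((nbhd G X ∩ C).ncard : ℝ) < a * (C.ncard : ℝ) :=
  div_lt_iff₀ (by exact_mod_cast (Set.ncard_pos).2 hC)

theorem coverDensity_mono (h : X ⊆ Y) : coverDensity G X C ≤ coverDensity G Y C := by
  have hsub : nbhd G X ∩ C ⊆ nbhd G Y ∩ C := by
    simp only [nbhd_eq_biUnion]
    exact Set.inter_subset_inter_left C (Set.biUnion_subset_biUnion_left h)
  unfold coverDensity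
  gcongr
  exact Set.toFinite _

theorem exists_subset_card_eq_mul_coverDensity_le (X : Finset V) (C : Set V) {m : ℕ}
    (hm : m ≤ X.card) :
    ∃ Y ⊆ X, Y.card = m ∧ m * coverDensity G X C ≤ X.card * coverDensity G Y C := by
  classical
  let t : V → Finset V := fun v => (Set.toFinite (G.neighborSet v ∩ C)).toFinset
  have hcount (Z : Finset V) : (nbhd G Z ∩ C).ncard = (Z.biUnion t).card := by
    rw [← Set.ncard_coe_finset]
    congr 1
    ext u
    simp [nbhd, t]
    grind
  obtain ⟨Y, hYX, hYm, havg⟩ := exists_subset_card_eq_mul_card_biUnion_le X t hm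
  refine ⟨Y, hYX, hYm, ?_⟩
  rw [← hcount, ← hcount] at havg
  simp only [coverDensity, ← mul_div_assoc]
  gcongr ?_ / _
  exact_mod_cast havg

theorem exists_subset_card_eq_div_le_coverDensity {X : Finset V} {α q : ℝ} {m : ℕ}
    (hα : α ≤ coverDensity G X C) (hm : 0 < m) (hmX : m ≤ X.card) (hq : X.card ≤ q * m) :
    ∃ Y ⊆ X, Y.card = m ∧ α / q ≤ coverDensity G Y C := by
  obtain ⟨Y, hYX, hYm, havg⟩ := exists_subset_card_eq_mul_coverDensity_le (G := G) X C hmX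
  have hm0 : (0 : ℝ) < m := Nat.cast_pos.2 hm
  have hq0 : 0 < q := pos_of_mul_pos_left (hm0.trans_le ((Nat.cast_le.2 hmX).trans hq)) hm0.le
  have hscaled : m * α ≤ m * (q * coverDensity G Y C) :=
    calc m * α ≤ m * coverDensity G X C := by gcongr
      _ ≤ X.card * coverDensity G Y C := havg
      _ ≤ q * m * coverDensity G Y C := mul_le_mul_of_nonneg_right hq coverDensity_nonneg
      _ = m * (q * coverDensity G Y C) := by ring
  exact ⟨Y, hYX, hYm, (div_le_iff₀' hq0).2 (le_of_mul_le_mul_left hscaled hm0)⟩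

end CoverDensity

section MinCover

variable {G : SimpleGraph V} {A C : Set V} {α δ : ℝ} {X : Finset V}

/-- `X` is a subset of `A` of least cardinality among those covering at least an `α` proportion
of `C`. -/
def IsMinCover (G : SimpleGraph V) (A C : Set V) (α : ℝ) (X : Finset V) : Prop :=
  MinimalFor (fun X : Finset V => (X : Set V) ⊆ A ∧ α ≤ coverDensity G X C) Finset.card X

theorem exists_isMinCover [Finite V] (h : α ≤ coverDensity G A C) : ∃ X, IsMinCover G A C α X := by
  refine exists_minimalFor_of_wellFoundedLT _ _ ⟨(Set.toFinite A).toFinset, ?_⟩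
  simpa using h

theorem IsMinCover.coverDensity_lt_of_card_lt {Z : Finset V} (hX : IsMinCover G A C α X)
    (hZ : (Z : Set V) ⊆ A) (hcard : Z.card < X.card) : coverDensity G Z C < α := by
  by_contra! h
  exact hcard.not_ge (hX.2 ⟨hZ, h⟩ hcard.le)

theorem IsMinCover.nonempty (hX : IsMinCover G A C α X) (hα : 0 < α) : X.Nonempty := by
  by_contra! h
  have hle : α ≤ coverDensity G ∅ C := by simpa only [h, Finset.coe_empty] using hX.1.2
  exact hα.not_ge (hle.trans_eq coverDensity_empty)

theorem IsMinCover.lt_card_mul (hX : IsMinCover G A C α X) (hα : 0 < α)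
    (hdeg : ∀ v ∈ A, coverDensity G {v} C < δ) : α < X.card * δ := by
  calc α ≤ coverDensity G X C := hX.1.2
    _ = coverDensity G (⋃ v ∈ X, {v}) C := congrArg (coverDensity G · C) (by ext; simp)
    _ ≤ ∑ v ∈ X, coverDensity G {v} C := coverDensity_biUnion_le X _
    _ < ∑ _v ∈ X, δ := Finset.sum_lt_sum_of_nonempty (hX.nonempty hα) fun v hv => hdeg v (hX.1.1 hv)
    _ = X.card * δ := by simp

theorem IsMinCover.coverDensity_lt_add {Y : Finset V} (hX : IsMinCover G A C α X)
    (hY : (Y : Set V) ⊆ A) (hne : Y.Nonempty) (hcard : Y.card ≤ X.card)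
    (hdeg : ∀ v ∈ A, coverDensity G {v} C < δ) : coverDensity G Y C < α + δ := by
  classical
  obtain ⟨v, hv⟩ := hne
  have herase : coverDensity G (Y.erase v) C < α :=
    hX.coverDensity_lt_of_card_lt (fun u hu => hY (Finset.mem_of_mem_erase hu))
      ((Finset.card_erase_lt_of_mem hv).trans_le hcard)
  calc coverDensity G Y C = coverDensity G (↑(Y.erase v) ∪ {v}) C := by
        rw [Set.union_singleton, ← Finset.coe_insert, Finset.insert_erase hv]
    _ ≤ coverDensity G (Y.erase v) C + coverDensity G {v} C := coverDensity_union_le _ _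
    _ < α + δ := add_lt_add herase (hdeg v (hY hv))

end MinCover

section SelectiveCovering

variable {ι : Type*} {G : SimpleGraph V} {A : Set V} {B : ι → Set V} {α δ : ℝ}

theorem exists_forall_coverDensity_mem_Ico_of_isMinCover [Finite V] {J : Finset ι}
    {X : ι → Finset V} {q : ℝ} (hα : 0 < α) (hJ : J.Nonempty)
    (hX : ∀ i ∈ J, IsMinCover G A (B i) α (X i))
    (hdeg : ∀ i ∈ J, ∀ v ∈ A, coverDensity G {v} (B i) < δ)
    (hq : ∀ i ∈ J, ∀ j ∈ J, ((X i).card : ℝ) ≤ q * (X j).card) :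
    ∃ Z ⊆ A, ∀ i ∈ J, coverDensity G Z (B i) ∈ Set.Ico (α / q) (J.card * (α + δ)) := by
  obtain ⟨i₀, hi₀, hmin⟩ := J.exists_min_image (fun i => (X i).card) hJ
  set m := (X i₀).card
  have hm : 0 < m := Finset.card_pos.2 ((hX i₀ hi₀).nonempty hα)
  have htrim : ∀ i ∈ J, ∃ Y ⊆ X i, Y.card = m ∧ α / q ≤ coverDensity G Y (B i) := fun i hi =>
    exists_subset_card_eq_div_le_coverDensity (hX i hi).1.2 hm (hmin i hi) (hq i hi i₀ hi₀)
  choose! Y hYX hYm hYα using htrim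
  have hYA : ∀ i ∈ J, (Y i : Set V) ⊆ A := fun i hi =>
    (Finset.coe_subset.2 (hYX i hi)).trans (hX i hi).1.1
  have hYne : ∀ i ∈ J, (Y i).Nonempty := fun i hi =>
    Finset.card_pos.1 (hm.trans_eq (hYm i hi).symm)
  refine ⟨⋃ i ∈ J, (Y i : Set V), Set.iUnion₂_subset hYA, fun j hj => ⟨?_, ?_⟩⟩
  · exact (hYα j hj).trans
      (coverDensity_mono (Set.subset_biUnion_of_mem (u := fun i => (Y i : Set V)) hj))
  · calc coverDensity G (⋃ i ∈ J, (Y i : Set V)) (B j)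
        ≤ ∑ i ∈ J, coverDensity G (Y i) (B j) := coverDensity_biUnion_le J _
      _ < ∑ _i ∈ J, (α + δ) := Finset.sum_lt_sum_of_nonempty hJ fun i hi =>
        (hX j hj).coverDensity_lt_add (hYA i hi) (hYne i hi) ((hYm i hi).trans_le (hmin j hj))
          (hdeg j hj)
      _ = J.card * (α + δ) := by rw [Finset.sum_const, nsmul_eq_mul]

theorem exists_class_of_not_isPartitionableInto {I : Finset ι} {k : ℕ} {θ a : ℝ} (hk : 1 ≤ k)
    (hkI : k ≤ I.card) (hfew : ∀ v ∈ A, {i ∈ I | θ ≤ coverDensity G {v} (B i)}.card < k)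
    (hA : ¬ IsPartitionableInto (I.card ^ k)
      (fun X => ∃ J ⊆ I, J.card = k ∧ ∀ j ∈ J, coverDensity G X (B j) < a) A) :
    ∃ A' ⊆ A, ∃ D : Finset ι, D.card < k ∧
      (∀ i ∈ I, i ∉ D → ∀ v ∈ A', coverDensity G {v} (B i) < θ) ∧
      {i ∈ I | coverDensity G A' (B i) < a}.card < k := by
  classical
  let D : V → Finset ι := fun v => {i ∈ I | θ ≤ coverDensity G {v} (B i)}
  obtain ⟨s, hs, hclass⟩ : ∃ s ∈ I.powerset.filter (·.card < k), ¬ ∃ J ⊆ I, J.card = k ∧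
      ∀ j ∈ J, coverDensity G {v ∈ A | D v = s} (B j) < a := by
    by_contra! h
    refine hA (isPartitionableInto_of_fibers (D := D)
      (card_powerset_filter_card_lt_le_pow I hk hkI) (fun v hv => ?_) h)
    exact Finset.mem_filter.2 ⟨Finset.mem_powerset.2 (Finset.filter_subset _ _), hfew v hv⟩
  refine ⟨{v ∈ A | D v = s}, Set.sep_subset _ _, s, (Finset.mem_filter.1 hs).2,
    fun i hi his v hv => ?_, ?_⟩
  · by_contra! hle
    exact his (hv.2 ▸ Finset.mem_filter.2 ⟨hi, hle⟩)
  · by_contra! hle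
    obtain ⟨J, hJ, hJk⟩ := Finset.exists_subset_card_eq hle
    exact hclass ⟨J, hJ.trans (Finset.filter_subset _ _), hJk,
      fun j hj => (Finset.mem_filter.1 (hJ hj)).2⟩

theorem mul_add_min_le {K k : ℕ} {θ ε : ℝ} (hk : 1 ≤ k) (hkK : k ≤ K) (hθ : θ ≤ 1) (hε : 0 ≤ ε)
    (hα : 0 ≤ α) : k * (α + min (θ * α) ε) ≤ (K : ℝ) ^ k * α + ε := by
  obtain rfl | hk2 := hk.eq_or_lt
  · have hK : α ≤ K * α := le_mul_of_one_le_left hα (by exact_mod_cast hkK)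
    simpa using add_le_add hK (min_le_right (θ * α) ε)
  · have hpow : 2 * k ≤ K ^ k :=
      calc 2 * k ≤ K * K := by gcongr; lia
        _ = K ^ 2 := (sq K).symm
        _ ≤ K ^ k := Nat.pow_le_pow_right (by lia) hk2
    have hmin : min (θ * α) ε ≤ α := (min_le_left _ _).trans (mul_le_of_le_one_left hα hθ)
    calc k * (α + min (θ * α) ε) ≤ k * (α + α) := by gcongr
      _ = (2 * k : ℕ) * α := by push_cast; ring
      _ ≤ (K ^ k : ℕ) * α := by gcongr
      _ ≤ (K : ℝ) ^ k * α + ε := by push_cast; linarith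

variable [Fintype V]

theorem exists_forall_coverDensity_mem_Ico {T : Finset ι} {c : ℝ} {k : ℕ} (hk : 1 ≤ k)
    (hc : 0 < c) (hα : 0 < α) (hδ : δ ≤ (Fintype.card V : ℝ) ^ (-c) * α)
    (hA : ∀ i ∈ T, α ≤ coverDensity G A (B i))
    (hdeg : ∀ i ∈ T, ∀ v ∈ A, coverDensity G {v} (B i) < δ)
    (hT : (⌈1 / c⌉ - 1).toNat * (k - 1) < T.card) :
    ∃ X ⊆ A, ∃ J ⊆ T, J.card = k ∧ ∀ i ∈ J, coverDensity G X (B i) ∈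
      Set.Ico ((Fintype.card V : ℝ) ^ (-c) * α) (k * (α + δ)) := by
  have hcover : ∀ i ∈ T, ∃ X, IsMinCover G A (B i) α X := fun i hi => exists_isMinCover (hA i hi)
  choose! X hX using hcover
  have hlarge : ∀ i ∈ T, (Fintype.card V : ℝ) ^ c < (X i).card := by
    intro i hi
    have hlt : 1 * α < (X i).card * (Fintype.card V : ℝ) ^ (-c) * α :=
      calc 1 * α = α := one_mul α
        _ < (X i).card * δ := (hX i hi).lt_card_mul hα (hdeg i hi)
        _ ≤ (X i).card * ((Fintype.card V : ℝ) ^ (-c) * α) := by gcongr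
        _ = (X i).card * (Fintype.card V : ℝ) ^ (-c) * α := by ring
    have hone := lt_of_mul_lt_mul_right hlt hα.le
    rw [Real.rpow_neg (Nat.cast_nonneg _), ← div_eq_mul_inv] at hone
    by_contra! hle
    exact hone.not_ge (div_le_one_of_le₀ hle (by positivity))
  obtain ⟨J, hJT, hJk, hJ⟩ := exists_subset_card_eq_forall_card_le_rpow_mul hc hlarge hT
  obtain ⟨Z, hZA, hZ⟩ := exists_forall_coverDensity_mem_Ico_of_isMinCover hα
    (Finset.card_pos.1 (by lia)) (fun i hi => hX i (hJT hi)) (fun i hi => hdeg i (hJT hi)) hJ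
  refine ⟨Z, hZA, J, hJT, hJk, fun i hi => ?_⟩
  simpa only [hJk, Real.rpow_neg (Nat.cast_nonneg _), div_eq_inv_mul] using hZ i hi

theorem exists_forall_coverDensity_mem_Ico_of_not_isPartitionableInto {I : Finset ι} {k : ℕ}
    {c ε : ℝ} (hk : 1 ≤ k) (hc : 0 < c) (hε : 0 < ε) (hα : 0 < α) (hkI : k ≤ I.card)
    (hI : (2 + 1 / c) * ((k : ℝ) - 1) ≤ I.card)
    (hdeg : ∀ i ∈ I, ∀ v ∈ A, coverDensity G {v} (B i) < ε)
    (hA : ¬ IsPartitionableInto (I.card ^ k) (fun X => ∃ J ⊆ I, J.card = k ∧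
      ∀ j ∈ J, coverDensity G X (B j) < (I.card : ℝ) ^ k * α) A) :
    ∃ X ⊆ A, ∃ J ⊆ I, J.card = k ∧ ∀ i ∈ J, coverDensity G X (B i) ∈
      Set.Ico ((Fintype.card V : ℝ) ^ (-c) * α) ((I.card : ℝ) ^ k * α + ε) := by
  classical
  set θ : ℝ := (Fintype.card V : ℝ) ^ (-c)
  by_cases! hmany : ∃ v ∈ A, k ≤ {i ∈ I | θ * α ≤ coverDensity G {v} (B i)}.card
  · obtain ⟨v, hv, hk⟩ := hmany
    exact ⟨{v}, Set.singleton_subset_iff.2 hv, exists_subset_card_eq_forall_mem_Ico hk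
      fun i hi => (hdeg i hi v hv).trans_le (le_add_of_nonneg_left (by positivity))⟩
  obtain ⟨A', hA'A, D, hD, hDdeg, hS⟩ := exists_class_of_not_isPartitionableInto hk hkI hmany hA
  set S : Finset ι := {i ∈ I | coverDensity G A' (B i) < (I.card : ℝ) ^ k * α}
  have hT : ∀ i ∈ I \ (D ∪ S), i ∈ I ∧ i ∉ D ∧ i ∉ S := by simp
  have hcover : ∀ i ∈ I \ (D ∪ S), α ≤ coverDensity G A' (B i) := by
    intro i hi
    have hge : (I.card : ℝ) ^ k * α ≤ coverDensity G A' (B i) := by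
      by_contra! hlt
      exact (hT i hi).2.2 (Finset.mem_filter.2 ⟨(hT i hi).1, hlt⟩)
    have hIcard : (1 : ℝ) ≤ I.card := Nat.one_le_cast.2 (hk.trans hkI)
    exact (le_mul_of_one_le_left hα.le (one_le_pow₀ hIcard)).trans hge
  have hdeg' : ∀ i ∈ I \ (D ∪ S), ∀ v ∈ A', coverDensity G {v} (B i) < min (θ * α) ε :=
    fun i hi v hv => lt_min (hDdeg i (hT i hi).1 (hT i hi).2.1 v hv)
      (hdeg i (hT i hi).1 v (hA'A hv))
  obtain ⟨X, hXA', J, hJ, hJk, hX⟩ := exists_forall_coverDensity_mem_Ico hk hc hα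
    (min_le_left _ _) hcover hdeg'
    (ceil_sub_one_mul_lt_card_sdiff_union (one_div_pos.2 hc) hD hS hkI hI)
  refine ⟨X, hXA'.trans hA'A, J, fun i hi => (hT i (hJ hi)).1, hJk, fun i hi =>
    ⟨(hX i hi).1, (hX i hi).2.trans_le (mul_add_min_le hk hkI ?_ hε.le hα.le)⟩⟩
  obtain hV | hV := Nat.eq_zero_or_pos (Fintype.card V)
  · simp [hV, hc.ne']
  · exact Real.rpow_le_one_of_one_le_of_nonpos (Nat.one_le_cast.2 hV) (by linarith)

theorem statement_13_general (G : SimpleGraph V) {k : ℕ} (hk : 1 ≤ k) {c ε α : ℝ} (hc : 0 < c)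
    (hε : 0 < ε) (hα : 0 < α) {I : Finset ι} (hkI : k ≤ I.card)
    (hI : (2 + 1 / c) * ((k : ℝ) - 1) ≤ I.card) {B : ι → Set V} (hB : ∀ i ∈ I, (B i).Nonempty)
    {A : Set V}
    (hmax : ∀ i ∈ I, ∀ v ∈ A, ((G.neighborSet v ∩ B i).ncard : ℝ) < ε * ((B i).ncard : ℝ))
    (hA : ¬ IsPartitionableInto (I.card ^ k) (fun X => ∃ J ⊆ I, J.card = k ∧ ∀ j ∈ J,
      ((nbhd G X ∩ B j).ncard : ℝ) < (I.card : ℝ) ^ k * α * ((B j).ncard : ℝ)) A) :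
    ∃ X ⊆ A, ∃ J ⊆ I, J.card = k ∧ ∀ i ∈ J,
      (Fintype.card V : ℝ) ^ (-c) * α ≤ ((nbhd G X ∩ B i).ncard : ℝ) / ((B i).ncard : ℝ) ∧
      ((nbhd G X ∩ B i).ncard : ℝ) / ((B i).ncard : ℝ) < (I.card : ℝ) ^ k * α + ε := by
  have hdeg : ∀ i ∈ I, ∀ v ∈ A, coverDensity G {v} (B i) < ε := fun i hi v hv =>
    (coverDensity_lt_iff (hB i hi)).2 (by simpa [nbhd_eq_biUnion] using hmax i hi v hv)
  exact exists_forall_coverDensity_mem_Ico_of_not_isPartitionableInto hk hc hε hα hkI hI hdeg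
    fun h => hA <| h.mono fun X ⟨J, hJI, hJk, hJ⟩ =>
      ⟨J, hJI, hJk, fun j hj => (coverDensity_lt_iff (hB j (hJI hj))).1 (hJ j hj)⟩

end SelectiveCovering

/-- selective covering. -/
theorem statement_13 {V : Type} [Fintype V] (G : SimpleGraph V)
    (K k : ℕ) (hk : 1 ≤ k) (hKk : k ≤ K)
    (c : ℝ) (hc : 0 < c) (hK : (2 + 1/c) * ((k : ℝ) - 1) ≤ (K : ℝ))
    (ε α : ℝ) (hε : 0 < ε) (hα : 0 < α)
    (I : Finset ℤ) (B : ℤ → Set V) (hB : IsBlockade I B) (hlen : I.card = K)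
    (A : Set V) (hAdisj : Disjoint A (⋃ i ∈ I, B i))
    (hcov : Covers G A (⋃ i ∈ I, B i))
    (hmax : ∀ i ∈ I, ∀ v ∈ A,
      ((G.neighborSet v ∩ B i).ncard : ℝ) < ε * ((B i).ncard : ℝ))
    (hnopart : ¬ ∃ (n : ℕ) (f : ℕ → Set V), n ≤ K ^ k ∧
        (∀ t < n, f t ⊆ A) ∧ (∀ s < n, ∀ t < n, s ≠ t → Disjoint (f s) (f t)) ∧
        (A ⊆ ⋃ t ∈ Finset.range n, f t) ∧
        ∀ t < n, ∃ J ⊆ I, J.card = k ∧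
          ∀ j ∈ J, ((nbhd G (f t) ∩ B j).ncard : ℝ) <
            (K : ℝ) ^ k * α * ((B j).ncard : ℝ)) :
    ∃ X ⊆ A, ∃ J ⊆ I, J.card = k ∧
      ∀ i ∈ J,
        (Fintype.card V : ℝ) ^ (-c) * α ≤
          ((nbhd G X ∩ B i).ncard : ℝ) / ((B i).ncard : ℝ) ∧
        ((nbhd G X ∩ B i).ncard : ℝ) / ((B i).ncard : ℝ) < (K : ℝ) ^ k * α + ε := by
  subst hlen
  exact statement_13_general G hk hc hε hα hKk hK hB.1 hmax hnopart

end PurePairs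
end
end

section
/- Let K≥k≥1 be integers, let γ,δ,λ,η,c>0 with K ≥ (2+1/c)k, and let A be a blockade with linkage at most λ in a graph G that is not (γ,δ)-divergent, where η/2 ≥ K^{k+1}δ|G|^c + λ + γ. Let (L, M, C) be an A-rainbow bi-levelling with length K and height ℓ, whose blockade C has A-size at least η. Then there is an A-rainbow bi-levelling (L', M', C') with length k and height ℓ+1, such that every block of C' is a subset of a distinct block of C, and C' has C-size at least 1/2. -/
noncomputable section

namespace PurePairs

open SimpleGraph

variable {V W : Type*}

/-!
Write `K` for the length of `C`. Let `P` be the set of pairs `(h, S)` of an index `h` and a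
`k`-subset `S` of the indices of `C`, and assign to each pair, one vertex at a time, a set of
vertices of the last level of `M`. A vertex `v` with neighbours in an untouched part of the first
block has densities `d j` of untouched neighbours in the blocks, and `d j < 1` by linkage. Going
through the indices in increasing order, `d` cannot grow by a factor `g = |G| ^ c` more than `m`
times when all blocks of `A` have at most `g ^ m` vertices. Hence `mk < K` forces an index `h` and
a set `S` of `k` later ones with `d i ≤ g * d h` on `S`, and `v` can be added to the set of
`(h, S)`. As long as no head `C h` is covered up to density `δ`, at most `K ^ (k + 1) * δ * g` of
each block is touched, so the process goes on; when it stops, some set `N` covers at least a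
proportion `δ` of its head but little of the blocks indexed by `S`.

The covered set `X = nbhd G N ∩ C h` becomes the new last level of `M`, after `N`. As the blockade
is not divergent, most of each `C i`, `i ∈ S`, has a neighbour in `X`, so at least half of `C i` is
covered by `X` and anticomplete to `N`. Removing from the last level of `L` the vertices with a
neighbour in `X` keeps the levellings parallel; it does not affect the forward grading of blocks
later than `h`, because the grading sets of later blocks have no neighbours in `C h`.
-/

section Growth

variable {ι R : Type*} [LinearOrder ι] [Semiring R] [LinearOrder R] [IsStrictOrderedRing R]

lemma exists_le_card_filter_lt_and_le_mul {d : ι → R} {g b : R} (hg : 0 ≤ g) {k m : ℕ}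
    {J : Finset ι} (hJ : m * k < J.card) {j₀ : ι} (hj₀ : IsLeast (J : Set ι) j₀)
    (hpos : 0 < d j₀) (hb : b ≤ g ^ m * d j₀) (hd : ∀ j ∈ J, d j < b) :
    ∃ h ∈ J, 0 < d h ∧ k ≤ (J.filter fun i => h < i ∧ d i ≤ g * d h).card := by
  induction m generalizing J j₀ with
  | zero => exact absurd (hd j₀ hj₀.1) (by simpa using hb)
  | succ m ih =>
    by_cases hk : k ≤ (J.filter fun i => j₀ < i ∧ d i ≤ g * d j₀).card
    · exact ⟨j₀, hj₀.1, hpos, hk⟩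
    set J' := J.filter fun i => j₀ < i ∧ g * d j₀ < d i with hJ'
    have hsub : J ⊆ insert j₀ ((J.filter fun i => j₀ < i ∧ d i ≤ g * d j₀) ∪ J') := by
      intro i hi
      rcases (hj₀.2 hi).eq_or_lt with rfl | hlt
      · simp
      · simp [hJ', hi, hlt, le_or_gt]
    have hcard : m * k < J'.card := by
      have h₁ := (Finset.card_le_card hsub).trans (Finset.card_insert_le _ _)
      have h₂ := Finset.card_union_le (J.filter fun i => j₀ < i ∧ d i ≤ g * d j₀) J'
      rw [add_mul, one_mul] at hJ
      omega
    have hne : J'.Nonempty := Finset.card_pos.1 (by omega)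
    have hleast := J'.isLeast_min' hne
    have hgrow : g * d j₀ < d (J'.min' hne) := (Finset.mem_filter.1 hleast.1).2.2
    obtain ⟨h, hh, hdh, hcount⟩ := ih hcard hleast
      ((mul_nonneg hg hpos.le).trans_lt hgrow)
      (calc b ≤ g ^ m * (g * d j₀) := by rwa [← mul_assoc, ← pow_succ]
        _ ≤ g ^ m * d (J'.min' hne) := by gcongr)
      (fun j hj => hd j (Finset.filter_subset _ _ hj))
    refine ⟨h, Finset.filter_subset _ _ hh, hdh, hcount.trans ?_⟩
    exact Finset.card_le_card (Finset.filter_subset_filter _ (Finset.filter_subset _ _))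

lemma exists_pair_lt_and_le_mul {d : ι → R} {g b : R} (hg : 0 ≤ g) {k m : ℕ}
    {J : Finset ι} (hJ : m * k < J.card) {j₀ : ι} (hj₀ : IsLeast (J : Set ι) j₀)
    (hpos : 0 < d j₀) (hb : b ≤ g ^ m * d j₀) (hd : ∀ j ∈ J, d j < b) :
    ∃ p ∈ J ×ˢ J.powersetCard k, 0 < d p.1 ∧ ∀ i ∈ p.2, p.1 < i ∧ d i ≤ g * d p.1 := by
  obtain ⟨h, hh, hdh, hcount⟩ := exists_le_card_filter_lt_and_le_mul hg hJ hj₀ hpos hb hd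
  obtain ⟨S, hS, hcard⟩ := Finset.exists_subset_card_eq hcount
  exact ⟨(h, S), Finset.mk_mem_product hh
    (Finset.mem_powersetCard.2 ⟨hS.trans (Finset.filter_subset _ _), hcard⟩), hdh,
    fun i hi => (Finset.mem_filter.1 (hS hi)).2⟩

end Growth

lemma card_product_powersetCard_le {ι : Type*} (J : Finset ι) (k : ℕ) :
    (J ×ˢ J.powersetCard k).card ≤ J.card ^ (k + 1) := by
  rw [Finset.card_product, Finset.card_powersetCard, pow_succ']
  exact Nat.mul_le_mul_left _ (Nat.choose_le_pow _ _)

lemma nbhd_insert (G : SimpleGraph V) (v : V) (X : Set V) :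
    nbhd G (insert v X) = nbhd G X ∪ G.neighborSet v := by
  ext y
  simp [nbhd, or_comm]

section Greedy

variable {ι : Type*} {G : SimpleGraph V} {C : ι → Set V} {α : ι → ℝ}
  {P : Finset (ι × Finset ι)} {N : P → Set V} {v : V} {p : P} {J : Finset ι} {B : Set V}
  {g δ : ℝ}

/-- The part of `C j` that has been used up by an assignment `N` of vertex sets to the pairs
`(h, S) ∈ P`: the vertices with a neighbour in a set assigned to a pair that involves `j`,
as its head `h` or as a member of its tail `S`. -/
def touched (G : SimpleGraph V) (C : ι → Set V) (N : P → Set V) (j : ι) : Set V :=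
  {y ∈ C j | ∃ p : P, (j = p.1.1 ∨ j ∈ p.1.2) ∧ y ∈ nbhd G (N p)}

/-- The proportion, relative to the weight `α h`, of the head block `C h` of `p = (h, S)` that
the set assigned to `p` covers. -/
def coverage (G : SimpleGraph V) (C : ι → Set V) (α : ι → ℝ) (N : P → Set V) (p : P) : ℝ :=
  (nbhd G (N p) ∩ C p.1.1).ncard / α p.1.1

/-- The proportion, relative to the weight `α j`, of `C j` that consists of untouched
neighbours of `v`. -/
def freshDensity (G : SimpleGraph V) (C : ι → Set V) (α : ι → ℝ) (N : P → Set V) (v : V)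
    (j : ι) : ℝ :=
  ((G.neighborSet v ∩ C j) \ touched G C N j).ncard / α j

/-- The invariant of the greedy process that assigns the vertices of `B` to pairs: no head is
covered up to density `δ` yet, and the amount touched in any block is paid for, up to the
factor `g`, by the total coverage of the heads. -/
structure IsThrifty (G : SimpleGraph V) (C : ι → Set V) (α : ι → ℝ) (J : Finset ι) (B : Set V)
    (g δ : ℝ) (N : P → Set V) : Prop where
  subset : ∀ p, N p ⊆ B
  coverage_lt : ∀ p, coverage G C α N p < δ
  ncard_touched_le : ∀ j ∈ J,
    ((touched G C N j).ncard : ℝ) ≤ g * α j * ∑ p, coverage G C α N p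

lemma nbhd_inter_subset_touched {j : ι} (hj : j = p.1.1 ∨ j ∈ p.1.2) :
    nbhd G (N p) ∩ C j ⊆ touched G C N j :=
  fun _ hy => ⟨hy.2, p, hj, hy.1⟩

lemma freshDensity_nonneg {j : ι} (hα : 0 < α j) : 0 ≤ freshDensity G C α N v j :=
  div_nonneg (Nat.cast_nonneg _) hα.le

lemma freshDensity_mul {j : ι} (hα : 0 < α j) :
    freshDensity G C α N v j * α j =
      ((G.neighborSet v ∩ C j) \ touched G C N j).ncard :=
  div_mul_cancel₀ _ hα.ne'

lemma freshDensity_lt_one [Finite V] {j : ι} (hα : 0 < α j)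
    (hdeg : ((G.neighborSet v ∩ C j).ncard : ℝ) < α j) :
    freshDensity G C α N v j < 1 := by
  rw [freshDensity, div_lt_one hα]
  refine lt_of_le_of_lt ?_ hdeg
  exact_mod_cast Set.ncard_le_ncard Set.sdiff_subset

lemma inv_le_freshDensity [Finite V] {j : ι} {x : V} (hα : 0 < α j) (hx : x ∈ C j)
    (hxN : x ∉ touched G C N j) (hvx : G.Adj v x) : (α j)⁻¹ ≤ freshDensity G C α N v j := by
  rw [freshDensity, inv_eq_one_div]
  have hfresh : 0 < ((G.neighborSet v ∩ C j) \ touched G C N j).ncard :=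
    (Set.ncard_pos).2 ⟨x, ⟨hvx, hx⟩, hxN⟩
  gcongr
  exact_mod_cast hfresh

lemma isThrifty_empty (hδ : 0 < δ) : IsThrifty G C α J B g δ (fun _ : P => ∅) where
  subset _ := Set.empty_subset _
  coverage_lt _ := by simpa [coverage, nbhd] using hδ
  ncard_touched_le _ _ := by simp [touched, coverage, nbhd]

lemma IsThrifty.ncard_touched_le_card (hN : IsThrifty G C α J B g δ N) (hg : 0 ≤ g) {j : ι}
    (hj : j ∈ J) (hα : 0 < α j) : ((touched G C N j).ncard : ℝ) ≤ P.card * δ * g * α j := by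
  have hsum : ∑ p, coverage G C α N p ≤ P.card * δ := by
    simpa using Finset.sum_le_card_nsmul Finset.univ _ δ fun p _ => (hN.coverage_lt p).le
  calc ((touched G C N j).ncard : ℝ) ≤ g * α j * ∑ p, coverage G C α N p :=
        hN.ncard_touched_le j hj
    _ ≤ g * α j * (P.card * δ) := by gcongr
    _ = P.card * δ * g * α j := by ring

lemma IsThrifty.exists_adj_notMem_touched [Finite V] (hN : IsThrifty G C α J B g δ N)
    (hg : 0 ≤ g) {j : ι} (hj : j ∈ J) (hα : 0 < α j) (hcov : Covers G B (C j))
    (hbig : P.card * δ * g * α j < (C j).ncard) :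
    ∃ v ∈ B, ∃ x ∈ C j, G.Adj v x ∧ x ∉ touched G C N j := by
  have hlt : (touched G C N j).ncard < (C j).ncard := by
    exact_mod_cast (hN.ncard_touched_le_card hg hj hα).trans_lt hbig
  obtain ⟨x, hx, hxN⟩ := Set.exists_mem_notMem_of_ncard_lt_ncard hlt
  obtain ⟨v, hv, hvx⟩ := hcov x hx
  exact ⟨v, hv, x, hx, hvx, hxN⟩

lemma exists_maximal_isThrifty [Finite V] (hδ : 0 < δ) :
    ∃ N : P → Set V, Maximal (IsThrifty G C α J B g δ) N :=
  (Set.toFinite {N | IsThrifty G C α J B g δ N}).exists_maximal ⟨_, isThrifty_empty hδ⟩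

variable [DecidableEq ι]

/-- The assignment obtained from `N` by adding the vertex `v` to the set assigned to `p`. -/
def insertAt (N : P → Set V) (p : P) (v : V) : P → Set V :=
  Function.update N p (insert v (N p))

lemma nbhd_insertAt_self : nbhd G (insertAt N p v p) = nbhd G (N p) ∪ G.neighborSet v := by
  rw [insertAt, Function.update_self, nbhd_insert]

lemma le_insertAt : N ≤ insertAt N p v :=
  le_update_iff.2 ⟨Set.subset_insert _ _, fun _ _ => le_rfl⟩

lemma touched_insertAt_subset (j : ι) :
    touched G C (insertAt N p v) j ⊆
      touched G C N j ∪ (G.neighborSet v ∩ C j) \ touched G C N j := by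
  rw [Set.union_sdiff_self]
  rintro y ⟨hyC, q, hq, hy⟩
  obtain rfl | hqp := eq_or_ne q p
  · rw [nbhd_insertAt_self] at hy
    exact hy.imp (fun hy => ⟨hyC, q, hq, hy⟩) (fun hy => ⟨hy, hyC⟩)
  · rw [insertAt, Function.update_of_ne hqp] at hy
    exact Or.inl ⟨hyC, q, hq, hy⟩

lemma touched_insertAt_of_not {j : ι} (hj : ¬(j = p.1.1 ∨ j ∈ p.1.2)) :
    touched G C (insertAt N p v) j = touched G C N j := by
  refine Set.sep_ext_iff.2 fun y _ => exists_congr fun q => and_congr_right fun hq => ?_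
  rw [insertAt, Function.update_of_ne (by rintro rfl; exact hj hq)]

variable [Finite V]

lemma coverage_add_freshDensity_le (hα : 0 < α p.1.1) :
    coverage G C α N p + freshDensity G C α N v p.1.1 ≤ coverage G C α (insertAt N p v) p := by
  have hdisj : Disjoint (nbhd G (N p) ∩ C p.1.1)
      ((G.neighborSet v ∩ C p.1.1) \ touched G C N p.1.1) :=
    Set.disjoint_sdiff_right.mono_left (nbhd_inter_subset_touched (Or.inl rfl))
  have hsub : (nbhd G (N p) ∩ C p.1.1) ∪ (G.neighborSet v ∩ C p.1.1) \ touched G C N p.1.1 ⊆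
      nbhd G (insertAt N p v p) ∩ C p.1.1 := by
    rw [nbhd_insertAt_self, Set.union_inter_distrib_right]
    exact Set.union_subset_union_right _ Set.sdiff_subset
  rw [coverage, coverage, freshDensity, ← add_div]
  gcongr
  rw [← Nat.cast_add, ← Set.ncard_union_eq hdisj]
  exact_mod_cast Set.ncard_le_ncard hsub

lemma sum_coverage_add_freshDensity_le (hα : 0 < α p.1.1) :
    ∑ q, coverage G C α N q + freshDensity G C α N v p.1.1 ≤
      ∑ q, coverage G C α (insertAt N p v) q := by
  have hrest : ∑ q ∈ Finset.univ.erase p, coverage G C α (insertAt N p v) q =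
      ∑ q ∈ Finset.univ.erase p, coverage G C α N q :=
    Finset.sum_congr rfl fun q hq => by
      rw [coverage, insertAt, Function.update_of_ne (Finset.ne_of_mem_erase hq), coverage]
  rw [← Finset.add_sum_erase _ _ (Finset.mem_univ p),
    ← Finset.add_sum_erase _ (coverage G C α (insertAt N p v)) (Finset.mem_univ p), hrest,
    add_right_comm]
  gcongr
  exact coverage_add_freshDensity_le hα

lemma ncard_touched_insertAt_le (hα : 0 < α p.1.1) (hg : 1 ≤ g)
    (htail : ∀ i ∈ p.1.2, freshDensity G C α N v i ≤ g * freshDensity G C α N v p.1.1)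
    {j : ι} (hj : 0 < α j) :
    ((touched G C (insertAt N p v) j).ncard : ℝ) ≤
      (touched G C N j).ncard + g * freshDensity G C α N v p.1.1 * α j := by
  have hfresh : 0 ≤ freshDensity G C α N v p.1.1 := freshDensity_nonneg hα
  by_cases hjp : j = p.1.1 ∨ j ∈ p.1.2
  · have hle : freshDensity G C α N v j ≤ g * freshDensity G C α N v p.1.1 := by
      rcases hjp with rfl | hjS
      · exact le_mul_of_one_le_left hfresh hg
      · exact htail j hjS
    calc ((touched G C (insertAt N p v) j).ncard : ℝ)
        ≤ (touched G C N j).ncard +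
            ((G.neighborSet v ∩ C j) \ touched G C N j).ncard := by
          exact_mod_cast (Set.ncard_le_ncard (touched_insertAt_subset (v := v) j)).trans
            (Set.ncard_union_le _ _)
      _ ≤ _ := by
          rw [← freshDensity_mul hj]
          gcongr
  · rw [touched_insertAt_of_not hjp]
    exact le_add_of_nonneg_right (by positivity)

lemma isThrifty_insertAt (hN : IsThrifty G C α J B g δ N) (hv : v ∈ B) (hα : ∀ j ∈ J, 0 < α j)
    (hp : p.1.1 ∈ J) (hg : 1 ≤ g)
    (htail : ∀ i ∈ p.1.2, freshDensity G C α N v i ≤ g * freshDensity G C α N v p.1.1)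
    (hcov : coverage G C α (insertAt N p v) p < δ) :
    IsThrifty G C α J B g δ (insertAt N p v) where
  subset q := by
    obtain rfl | hq := eq_or_ne q p
    · rw [insertAt, Function.update_self]
      exact Set.insert_subset hv (hN.subset q)
    · rw [insertAt, Function.update_of_ne hq]
      exact hN.subset q
  coverage_lt q := by
    obtain rfl | hq := eq_or_ne q p
    · exact hcov
    · rw [coverage, insertAt, Function.update_of_ne hq]
      exact hN.coverage_lt q
  ncard_touched_le j hj := by
    have hαj : 0 ≤ α j := (hα j hj).le
    calc ((touched G C (insertAt N p v) j).ncard : ℝ)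
        ≤ (touched G C N j).ncard + g * freshDensity G C α N v p.1.1 * α j :=
          ncard_touched_insertAt_le (hα _ hp) hg htail (hα j hj)
      _ ≤ g * α j * ∑ q, coverage G C α N q + g * freshDensity G C α N v p.1.1 * α j := by
          gcongr
          exact hN.ncard_touched_le j hj
      _ = g * α j * (∑ q, coverage G C α N q + freshDensity G C α N v p.1.1) := by ring
      _ ≤ g * α j * ∑ q, coverage G C α (insertAt N p v) q := by
          gcongr
          exact sum_coverage_add_freshDensity_le (hα _ hp)

lemma le_coverage_insertAt_of_maximal (hN : Maximal (IsThrifty G C α J B g δ) N) (hv : v ∈ B)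
    (hα : ∀ j ∈ J, 0 < α j) (hp : p.1.1 ∈ J) (hg : 1 ≤ g)
    (hpos : 0 < freshDensity G C α N v p.1.1)
    (htail : ∀ i ∈ p.1.2, freshDensity G C α N v i ≤ g * freshDensity G C α N v p.1.1) :
    δ ≤ coverage G C α (insertAt N p v) p := by
  by_contra! hcov
  have hthrifty := isThrifty_insertAt hN.prop hv hα hp hg htail hcov
  have heq : N = insertAt N p v := hN.eq_of_le hthrifty le_insertAt
  have hincr := coverage_add_freshDensity_le (G := G) (C := C) (N := N) (v := v) (hα _ hp)
  rw [← heq] at hincr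
  linarith

lemma ncard_nbhd_insertAt_inter_le {i : ι} (hi : i ∈ p.1.2) :
    (nbhd G (insertAt N p v p) ∩ C i).ncard ≤
      (touched G C N i).ncard + (G.neighborSet v ∩ C i).ncard := by
  rw [nbhd_insertAt_self, Set.union_inter_distrib_right]
  refine (Set.ncard_union_le _ _).trans ?_
  gcongr
  · exact Set.toFinite _
  · exact nbhd_inter_subset_touched (Or.inr hi)

end Greedy

section MaximalThrifty

variable {ι : Type*} [LinearOrder ι] [Finite V] {G : SimpleGraph V} {B : Set V} {J : Finset ι}
  {C : ι → Set V} {α : ι → ℝ} {k m : ℕ} {g δ lam : ℝ}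

lemma IsThrifty.exists_mem_pair {N : (J ×ˢ J.powersetCard k : Finset (ι × Finset ι)) → Set V}
    (hN : IsThrifty G C α J B g δ N) (hmk : m * k < J.card) (hg : 0 ≤ g)
    (hα : ∀ j ∈ J, 0 < α j) (hαg : ∀ j ∈ J, α j ≤ g ^ m) (hcov : ∀ j ∈ J, Covers G B (C j))
    (hdeg : ∀ v ∈ B, ∀ j ∈ J, ((G.neighborSet v ∩ C j).ncard : ℝ) < α j)
    (hbig : ∀ j ∈ J, (J ×ˢ J.powersetCard k).card * δ * g * α j < (C j).ncard) :
    ∃ v ∈ B, ∃ p ∈ J ×ˢ J.powersetCard k, 0 < freshDensity G C α N v p.1 ∧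
      ∀ i ∈ p.2, p.1 < i ∧ freshDensity G C α N v i ≤ g * freshDensity G C α N v p.1 := by
  have hJ : J.Nonempty := Finset.card_pos.1 (by omega)
  have hleast := J.isLeast_min' hJ
  set j₀ := J.min' hJ
  have hα₀ : 0 < α j₀ := hα _ hleast.1
  obtain ⟨v, hv, x, hx, hvx, hxN⟩ :=
    hN.exists_adj_notMem_touched hg hleast.1 hα₀ (hcov _ hleast.1) (hbig _ hleast.1)
  have hfresh : (α j₀)⁻¹ ≤ freshDensity G C α N v j₀ := inv_le_freshDensity hα₀ hx hxN hvx
  have hone : 1 ≤ g ^ m * freshDensity G C α N v j₀ :=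
    calc 1 = α j₀ * (α j₀)⁻¹ := (mul_inv_cancel₀ hα₀.ne').symm
      _ ≤ g ^ m * freshDensity G C α N v j₀ := by
        gcongr
        exact hαg _ hleast.1
  exact ⟨v, hv, exists_pair_lt_and_le_mul hg hmk hleast ((inv_pos.2 hα₀).trans_le hfresh) hone
    fun j hj => freshDensity_lt_one (hα j hj) (hdeg v hv j hj)⟩

lemma exists_subset_le_ncard_nbhd_and_ncard_nbhd_le (hmk : m * k < J.card) (hg : 1 ≤ g)
    (hδ : 0 < δ) (hlam : lam < 1) (hα : ∀ j ∈ J, 0 < α j) (hαg : ∀ j ∈ J, α j ≤ g ^ m)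
    (hcov : ∀ j ∈ J, Covers G B (C j))
    (hdeg : ∀ v ∈ B, ∀ j ∈ J, ((G.neighborSet v ∩ C j).ncard : ℝ) ≤ lam * α j)
    (hbig : ∀ j ∈ J, (J.card : ℝ) ^ (k + 1) * (δ * g * α j) < (C j).ncard) :
    ∃ h ∈ J, ∃ S ⊆ J, S.card = k ∧ (∀ i ∈ S, h < i) ∧ ∃ N ⊆ B,
      δ * α h ≤ (nbhd G N ∩ C h).ncard ∧
      ∀ i ∈ S, ((nbhd G N ∩ C i).ncard : ℝ) ≤
        ((J.card : ℝ) ^ (k + 1) * δ * g + lam) * α i := by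
  have hg₀ : 0 ≤ g := zero_le_one.trans hg
  set P := J ×ˢ J.powersetCard k
  have hP (j : ι) (hj : j ∈ J) :
      P.card * δ * g * α j ≤ (J.card : ℝ) ^ (k + 1) * (δ * g * α j) := by
    have hαj : 0 ≤ δ * g * α j := mul_nonneg (mul_nonneg hδ.le hg₀) (hα j hj).le
    rw [mul_assoc, mul_assoc, ← mul_assoc δ]
    gcongr
    exact_mod_cast card_product_powersetCard_le J k
  obtain ⟨N, hN⟩ : ∃ N : P → Set V, Maximal (IsThrifty G C α J B g δ) N :=
    exists_maximal_isThrifty hδ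
  obtain ⟨v, hv, p, hp, hpos, htail⟩ := hN.prop.exists_mem_pair hmk hg₀ hα hαg hcov
    (fun v hv j hj => (hdeg v hv j hj).trans_lt (mul_lt_of_lt_one_left (hα j hj) hlam))
    (fun j hj => (hP j hj).trans_lt (hbig j hj))
  obtain ⟨hpJ, hpS⟩ := Finset.mem_product.1 hp
  obtain ⟨hSJ, hcard⟩ := Finset.mem_powersetCard.1 hpS
  lift p to P using hp
  refine ⟨_, hpJ, _, hSJ, hcard, fun i hi => (htail i hi).1, insertAt N p v p, ?_, ?_,
    fun i hi => ?_⟩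
  · rw [insertAt, Function.update_self]
    exact Set.insert_subset hv (hN.prop.subset _)
  · exact (le_div_iff₀ (hα _ hpJ)).1 (le_coverage_insertAt_of_maximal hN hv hα
      hpJ hg hpos fun i hi => (htail i hi).2)
  · calc ((nbhd G (insertAt N p v p) ∩ C i).ncard : ℝ)
        ≤ (touched G C N i).ncard + (G.neighborSet v ∩ C i).ncard := by
          exact_mod_cast ncard_nbhd_insertAt_inter_le (G := G) (C := C) (N := N) (v := v) hi
      _ ≤ (J.card : ℝ) ^ (k + 1) * (δ * g * α i) + lam * α i :=
          add_le_add ((hN.prop.ncard_touched_le_card hg₀ (hSJ hi) (hα i (hSJ hi))).trans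
            (hP i (hSJ hi))) (hdeg v hv i (hSJ hi))
      _ = ((J.card : ℝ) ^ (k + 1) * δ * g + lam) * α i := by ring

end MaximalThrifty

section Levellings

variable {G : SimpleGraph V} {L L' M M' : ℕ → Set V} {a b k : ℕ} {X Y N U U' : Set V}
  {J S : Finset ℤ} {C C' : ℤ → Set V}

lemma Anticomplete.mono {X' Y' : Set V} (h : Anticomplete G X Y) (hX : X' ⊆ X) (hY : Y' ⊆ Y) :
    Anticomplete G X' Y' :=
  fun x hx y hy => h x (hX hx) y (hY hy)

lemma Anticomplete.symm (h : Anticomplete G X Y) : Anticomplete G Y X :=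
  fun y hy x hx hadj => h x hx y hy hadj.symm

lemma anticomplete_comm : Anticomplete G X Y ↔ Anticomplete G Y X :=
  ⟨Anticomplete.symm, Anticomplete.symm⟩

lemma anticomplete_sdiff_nbhd (G : SimpleGraph V) (X Y : Set V) :
    Anticomplete G X (Y \ nbhd G X) :=
  fun x hx _ hy hadj => hy.2 ⟨x, hx, hadj⟩

lemma covers_nbhd_inter (G : SimpleGraph V) (X Y : Set V) : Covers G X (nbhd G X ∩ Y) :=
  fun _ hy => hy.1

lemma Covers.mono {X' Y' : Set V} (h : Covers G X Y) (hX : X ⊆ X') (hY : Y' ⊆ Y) :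
    Covers G X' Y' :=
  fun y hy => (h y (hY hy)).imp fun _ hx => ⟨hX hx.1, hx.2⟩

lemma covers_biUnion : Covers G X (⋃ i ∈ S, C i) ↔ ∀ i ∈ S, Covers G X (C i) :=
  Set.iUnion₂_subset_iff (t := nbhd G X)

lemma anticomplete_biUnion_right {ι : Type*} {s : Finset ι} {D : ι → Set V} :
    Anticomplete G X (⋃ i ∈ s, D i) ↔ ∀ i ∈ s, Anticomplete G X (D i) := by
  simp only [Anticomplete, Set.mem_iUnion₂]
  exact ⟨fun h i hi x hx y hy => h x hx y ⟨i, hi, hy⟩,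
    fun h x hx y ⟨i, hi, hy⟩ => h i hi x hx y hy⟩

lemma anticomplete_biUnion_left {ι : Type*} {s : Finset ι} {D : ι → Set V} :
    Anticomplete G (⋃ i ∈ s, D i) X ↔ ∀ i ∈ s, Anticomplete G (D i) X := by
  simp only [anticomplete_comm (Y := X), anticomplete_biUnion_right]

lemma IsLevelling.mono_last (hL : IsLevelling G L k) (heq : ∀ i < k, L' i = L i)
    (hlast : L' k ⊆ L k) : IsLevelling G L' k := by
  obtain ⟨hk, hroot, hdisj, hcov, hanti⟩ := hL
  have hsub (i : ℕ) (hi : i ≤ k) : L' i ⊆ L i := by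
    rcases hi.eq_or_lt with rfl | hi
    exacts [hlast, (heq i hi).subset]
  refine ⟨hk, heq 0 hk ▸ hroot, fun i hi j hj hij => (hdisj i hi j hj hij).mono (hsub i hi)
    (hsub j hj), fun i hi hik => ?_, fun i hi hik h hh => (hanti i hi hik h hh).mono
    (hsub h (by omega)) (hsub i hik)⟩
  rw [heq (i - 1) (by omega)]
  exact (hcov i hi hik).mono subset_rfl (hsub i hik)

lemma isLevelling_succ_iff (hk : 1 ≤ k) :
    IsLevelling G L (k + 1) ↔ IsLevelling G L k ∧ (∀ i ≤ k, Disjoint (L i) (L (k + 1))) ∧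
      Covers G (L k) (L (k + 1)) ∧ ∀ i < k, Anticomplete G (L i) (L (k + 1)) := by
  constructor
  · rintro ⟨-, hroot, hdisj, hcov, hanti⟩
    exact ⟨⟨hk, hroot, fun i hi j hj => hdisj i (by omega) j (by omega),
      fun i hi hik => hcov i hi (by omega), fun i hi hik => hanti i hi (by omega)⟩,
      fun i hi => hdisj i (by omega) (k + 1) le_rfl (by omega), hcov (k + 1) (by omega) le_rfl,
      fun i hi => hanti (k + 1) (by omega) le_rfl i (by omega)⟩
  · rintro ⟨⟨-, hroot, hdisj, hcov, hanti⟩, hdisj', hcov', hanti'⟩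
    refine ⟨by omega, hroot, fun i hi j hj hij => ?_, fun i hi hik => ?_, fun i hi hik h hh => ?_⟩
    · rcases hi.eq_or_lt with rfl | hi
      · exact (hdisj' j (by omega)).symm
      rcases hj.eq_or_lt with rfl | hj
      exacts [hdisj' i (by omega), hdisj i (by omega) j (by omega) hij]
    · rcases hik.eq_or_lt with rfl | hik
      exacts [hcov', hcov i hi (by omega)]
    · rcases hik.eq_or_lt with rfl | hik
      exacts [hanti' h (by omega), hanti i hi (by omega) h hh]

lemma reaches_iff_isLevelling_update :
    Reaches G L k X ↔ IsLevelling G (Function.update L (k + 1) X) (k + 1) := by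
  rw [Reaches, funext (Function.update_apply L (k + 1) X)]

lemma reaches_iff (hL : IsLevelling G L k) :
    Reaches G L k X ↔ (∀ i ≤ k, Disjoint (L i) X) ∧ Covers G (L k) X ∧
      ∀ i < k, Anticomplete G (L i) X := by
  have heq (i : ℕ) (hi : i ≤ k) : Function.update L (k + 1) X i = L i :=
    Function.update_of_ne (by omega) _ _
  have hL' : IsLevelling G (Function.update L (k + 1) X) k :=
    hL.mono_last (fun i hi => heq i hi.le) (heq k le_rfl).subset
  rw [reaches_iff_isLevelling_update, isLevelling_succ_iff hL.1]
  simp +contextual only [hL', heq, le_refl, le_of_lt, Function.update_self, true_and]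

lemma update_subset (hY : Y ⊆ L k) (i : ℕ) : Function.update L k Y i ⊆ L i :=
  update_le_self_iff.2 hY i

lemma IsLevelling.update_last (hL : IsLevelling G L k) (hY : Y ⊆ L k) :
    IsLevelling G (Function.update L k Y) k :=
  hL.mono_last (fun _ hi => Function.update_of_ne hi.ne _ _) (update_subset hY k)

lemma Reaches.mono (hL : IsLevelling G L k) (hU : Reaches G L k U) (hsub : U' ⊆ U) :
    Reaches G L k U' := by
  obtain ⟨hdisj, hcov, hanti⟩ := (reaches_iff hL).1 hU
  exact (reaches_iff hL).2 ⟨fun i hi => (hdisj i hi).mono_right hsub, hcov.mono subset_rfl hsub,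
    fun i hi => (hanti i hi).mono subset_rfl hsub⟩

lemma Reaches.update_last (hL : IsLevelling G L k) (hU : Reaches G L k U) (hY : Y ⊆ L k)
    (hsub : U' ⊆ U) (hcov : Covers G Y U') : Reaches G (Function.update L k Y) k U' := by
  obtain ⟨hdisj, -, hanti⟩ := (reaches_iff hL).1 hU
  refine (reaches_iff (hL.update_last hY)).2
    ⟨fun i hi => (hdisj i hi).mono (update_subset hY i) hsub, by rwa [Function.update_self],
    fun i hi => (hanti i hi).mono (update_subset hY i) hsub⟩

lemma Reaches.succ (hX : Reaches G L k X) (hdisj : ∀ i ≤ k, Disjoint (L i) U)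
    (hanti : ∀ i ≤ k, Anticomplete G (L i) U) (hXU : Disjoint X U) (hcov : Covers G X U) :
    Reaches G (Function.update L (k + 1) X) (k + 1) U := by
  have heq (i : ℕ) (hi : i ≤ k) : Function.update L (k + 1) X i = L i :=
    Function.update_of_ne (by omega) _ _
  refine (reaches_iff (reaches_iff_isLevelling_update.1 hX)).2 ⟨fun i hi => ?_,
    by rwa [Function.update_self], fun i hi => ?_⟩
  · rcases hi.eq_or_lt with rfl | hi
    · rwa [Function.update_self]
    · rw [heq i (by omega)]
      exact hdisj i (by omega)
  · rw [heq i (by omega)]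
    exact hanti i (by omega)

lemma parallel_iff : Parallel G L a M b ↔ L 0 = M 0 ∧
    ∀ j ∈ Finset.Icc 1 b, ∀ i ∈ Finset.Icc 1 a,
      Disjoint (M j) (L i) ∧ Anticomplete G (M j) (L i) := by
  simp only [Parallel, Set.disjoint_iUnion₂_left, anticomplete_biUnion_left]
  simp only [Set.disjoint_iUnion₂_right, anticomplete_biUnion_right, forall_and]

lemma Parallel.mono (h : Parallel G L a M b) (hroot : L' 0 = M' 0) (hL : ∀ i, L' i ⊆ L i)
    (hM : ∀ i, M' i ⊆ M i) : Parallel G L' a M' b := by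
  refine parallel_iff.2 ⟨hroot, fun j hj i hi => ?_⟩
  obtain ⟨hdisj, hanti⟩ := (parallel_iff.1 h).2 j hj i hi
  exact ⟨hdisj.mono (hM j) (hL i), hanti.mono (hM j) (hL i)⟩

lemma Parallel.succ_right (h : Parallel G L a M b)
    (hX : ∀ i ∈ Finset.Icc 1 a, Disjoint X (L i) ∧ Anticomplete G X (L i)) :
    Parallel G L a (Function.update M (b + 1) X) (b + 1) := by
  obtain ⟨hroot, hpair⟩ := parallel_iff.1 h
  refine parallel_iff.2 ⟨by rwa [Function.update_of_ne (by omega)], fun j hj i hi => ?_⟩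
  obtain rfl | hne := eq_or_ne j (b + 1)
  · rw [Function.update_self]
    exact hX i hi
  · rw [Function.update_of_ne hne]
    exact hpair j (by simp only [Finset.mem_Icc] at hj ⊢; omega) i hi

lemma Parallel.extend (h : Parallel G L a M b) (hL : IsLevelling G L a) (hb : 1 ≤ b)
    (hX : Reaches G L a X) (hN : N ⊆ M b) :
    Parallel G (Function.update L a (L a \ nbhd G X)) a
      (Function.update (Function.update M b N) (b + 1) X) (b + 1) := by
  obtain ⟨hdisj, -, hanti⟩ := (reaches_iff hL).1 hX
  have hsub := update_subset (L := L) (k := a) (Set.sdiff_subset (t := nbhd G X))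
  have hroot : Function.update L a (L a \ nbhd G X) 0 = Function.update M b N 0 := by
    rw [Function.update_of_ne (by have := hL.1; omega), Function.update_of_ne (by omega), h.1]
  refine (h.mono hroot hsub (update_subset hN)).succ_right fun i hi => ?_
  have hia : i ≤ a := (Finset.mem_Icc.1 hi).2
  refine ⟨(hdisj i hia).symm.mono_right (hsub i), ?_⟩
  rcases hia.eq_or_lt with rfl | hia
  · rw [Function.update_self]
    exact anticomplete_sdiff_nbhd G X _
  · exact (hanti i hia).symm.mono subset_rfl (hsub i)

lemma biUnion_subset_biUnion (hSJ : S ⊆ J) (hsub : ∀ i ∈ S, C' i ⊆ C i) :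
    ⋃ i ∈ S, C' i ⊆ ⋃ j ∈ J, C j :=
  Set.iUnion₂_subset fun i hi => (hsub i hi).trans (Set.subset_biUnion_of_mem (hSJ hi))

lemma GradesFwd.extend (hL : IsLevelling G L a) (hgr : GradesFwd G L a J C) {h : ℤ} (hh : h ∈ J)
    (hSJ : S ⊆ J) (hlt : ∀ i ∈ S, h < i) (hX : X ⊆ C h) (hsub : ∀ i ∈ S, C' i ⊆ C i) :
    GradesFwd G (Function.update L a (L a \ nbhd G X)) a S C' := by
  obtain ⟨hreach, hgrade⟩ := hgr
  have hgrade' (j : ℤ) (hj : j ∈ S) : ∃ Y ⊆ L a \ nbhd G X,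
      (∀ i ∈ S, j ≤ i → Covers G Y (C' i)) ∧ ∀ i ∈ S, i < j → Anticomplete G Y (C' i) := by
    obtain ⟨Y, hY, hcov, hanti⟩ := hgrade j (hSJ hj)
    refine ⟨Y, fun y hy => ⟨hY hy, fun ⟨x, hx, hxy⟩ => ?_⟩,
      fun i hi hji => (hcov i (hSJ hi) hji).mono subset_rfl (hsub i hi),
      fun i hi hij => (hanti i (hSJ hi) hij).mono subset_rfl (hsub i hi)⟩
    exact hanti h hh (hlt j hj) y hy x (hX hx) hxy.symm
  refine ⟨hreach.update_last hL Set.sdiff_subset (biUnion_subset_biUnion hSJ hsub)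
    (covers_biUnion.2 fun i hi => ?_), by rwa [Function.update_self]⟩
  obtain ⟨Y, hY, hcov, -⟩ := hgrade' i hi
  exact (hcov i hi le_rfl).mono hY subset_rfl

lemma Reaches.extend (hM : IsLevelling G M b) (hU : Reaches G M b U) (hN : N ⊆ M b)
    (hXU : X ⊆ U) (hNX : Covers G N X) (hU' : U' ⊆ U) (hanti : Anticomplete G N U')
    (hdisj : Disjoint X U') (hcov : Covers G X U') :
    Reaches G (Function.update (Function.update M b N) (b + 1) X) (b + 1) U' := by
  obtain ⟨hdisjM, -, hantiM⟩ := (reaches_iff hM).1 hU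
  refine (hU.update_last hM hN hXU hNX).succ
    (fun i hi => (hdisjM i hi).mono (update_subset hN i) hU') (fun i hi => ?_) hdisj hcov
  rcases hi.eq_or_lt with rfl | hi
  · rwa [Function.update_self]
  · exact (hantiM i hi).mono (update_subset hN i) hU'

lemma IsBiLevelling.extend (hbl : IsBiLevelling G L a M b J C) {h : ℤ} (hh : h ∈ J)
    (hSJ : S ⊆ J) (hlt : ∀ i ∈ S, h < i) (hN : N ⊆ M b) (hX : X ⊆ C h) (hNX : Covers G N X)
    (hne : ∀ i ∈ S, (C' i).Nonempty) (hsub : ∀ i ∈ S, C' i ⊆ C i)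
    (hanti : ∀ i ∈ S, Anticomplete G N (C' i)) (hcov : ∀ i ∈ S, Covers G X (C' i)) :
    IsBiLevelling G (Function.update L a (L a \ nbhd G X)) a
      (Function.update (Function.update M b N) (b + 1) X) (b + 1) S C' := by
  obtain ⟨⟨-, hdisj⟩, hL, hM, hpar, hMC, hLC⟩ := hbl
  have hXU : X ⊆ ⋃ j ∈ J, C j := hX.trans (Set.subset_biUnion_of_mem hh)
  have hXC' : Disjoint X (⋃ i ∈ S, C' i) := Set.disjoint_iUnion₂_right.2 fun i hi =>
    (hdisj h hh i (hSJ hi) (hlt i hi).ne).mono hX (hsub i hi)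
  refine ⟨⟨hne, fun i hi j hj hij => (hdisj i (hSJ hi) j (hSJ hj) hij).mono (hsub i hi)
    (hsub j hj)⟩, hL.update_last Set.sdiff_subset, ?_, hpar.extend hL hM.1 ?_ hN, ?_,
    hLC.extend hL hh hSJ hlt hX hsub⟩
  · exact reaches_iff_isLevelling_update.1 (hMC.update_last hM hN hXU hNX)
  · exact hLC.1.mono hL hXU
  · exact hMC.extend hM hN hXU hNX (biUnion_subset_biUnion hSJ hsub)
      (anticomplete_biUnion_right.2 hanti) hXC' (covers_biUnion.2 hcov)

lemma RainbowBiLevelling.extend {I : Finset ℤ} {A : ℤ → Set V}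
    (hrb : RainbowBiLevelling I A L a M b J C) {h : ℤ} (hh : h ∈ J) (hSJ : S ⊆ J)
    (hhS : h ∉ S) (hY : Y ⊆ L a) (hN : N ⊆ M b) (hX : X ⊆ C h) (hsub : ∀ i ∈ S, C' i ⊆ C i) :
    RainbowBiLevelling I A (Function.update L a Y) a
      (Function.update (Function.update M b N) (b + 1) X) (b + 1) S C' := by
  obtain ⟨qc, ql, qm, hqc, hql, hqm, hcc, hll, hmm, hcl, hcm, hlm⟩ := hrb
  refine ⟨qc, ql, Function.update qm (b + 1) (qc h),
    fun j hj => ⟨(hqc j (hSJ hj)).1, (hsub j hj).trans (hqc j (hSJ hj)).2⟩,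
    fun i hi => ⟨(hql i hi).1, (update_subset hY i).trans (hql i hi).2⟩, fun i hi₁ hi => ?_,
    fun j hj j' hj' => hcc j (hSJ hj) j' (hSJ hj'), hll, ?_, fun j hj => hcl j (hSJ hj), ?_, ?_⟩
  · rcases hi.eq_or_lt with rfl | hi
    · simpa using ⟨(hqc h hh).1, hX.trans (hqc h hh).2⟩
    · simp only [Function.update_of_ne hi.ne]
      have hi' := hqm i hi₁ (by omega)
      exact ⟨hi'.1, (update_subset hN i).trans hi'.2⟩
  all_goals grind [Function.update_apply]

end Levellings

lemma ncard_sdiff_nbhd_lt {G : SimpleGraph V} {I : Finset ℤ} {A : ℤ → Set V} {γ δ : ℝ}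
    (hdiv : ¬ Divergent G I A γ δ) {i j : ℤ} (hi : i ∈ I) (hj : j ∈ I) (hij : i ≠ j)
    {X Z : Set V} (hZ : Z ⊆ A i) (hX : X ⊆ A j) (hδ : δ * (A j).ncard ≤ X.ncard) :
    ((Z \ nbhd G X).ncard : ℝ) < γ * (A i).ncard := by
  by_contra! hγ
  exact hdiv ⟨i, hi, j, hj, hij, _, Set.sdiff_subset.trans hZ, X, hX, hγ, hδ,
    (anticomplete_sdiff_nbhd G X Z).symm⟩

lemma half_mul_ncard_le_ncard_inter_sdiff [Finite V] {s t u : Set V} {x y η w : ℝ}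
    (ht : ((t ∩ s).ncard : ℝ) ≤ x * w) (hu : (((s \ t) \ u).ncard : ℝ) ≤ y * w)
    (hw : 0 ≤ w) (hxy : x + y ≤ η / 2) (hs : η * w ≤ s.ncard) :
    1 / 2 * (s.ncard : ℝ) ≤ (u ∩ (s \ t)).ncard := by
  have hsplit : s.ncard = (t ∩ s).ncard + ((u ∩ (s \ t)).ncard + ((s \ t) \ u).ncard) := by
    rw [Set.inter_comm t, Set.inter_comm u, Set.ncard_inter_add_ncard_sdiff_eq_ncard,
      Set.ncard_inter_add_ncard_sdiff_eq_ncard]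
  have hlost : (x + y) * w ≤ η / 2 * w := by gcongr
  have hsplit' : (s.ncard : ℝ) =
      (t ∩ s).ncard + ((u ∩ (s \ t)).ncard + ((s \ t) \ u).ncard) := by
    exact_mod_cast hsplit
  linarith

lemma sizeGE_of_subset {J S : Finset ℤ} {C C' : ℤ → Set V} {ε : ℝ} (hC : IsBlockade J C)
    (hSJ : S ⊆ J) (hne : ∀ i ∈ S, (C' i).Nonempty) (hsub : ∀ i ∈ S, C' i ⊆ C i)
    (hsize : ∀ i ∈ S, ε * (C i).ncard ≤ (C' i).ncard) : SizeGE J C S C' ε := by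
  intro i hi j hj hij
  obtain ⟨x, hx⟩ := hne i hi
  obtain rfl : i = j := by
    by_contra hne
    exact (hC.2 i (hSJ hi) j hj hne).ne_of_mem (hsub i hi hx) (hij hx) rfl
  exact hsize i hi

lemma le_rpow_pow_ceil_one_div {x c : ℝ} (hx : 1 ≤ x) (hc : 0 < c) :
    x ≤ (x ^ c) ^ ⌈1 / c⌉₊ := by
  rw [← Real.rpow_mul_natCast (by linarith)]
  refine Real.self_le_rpow_of_one_le hx ?_
  calc 1 = c * (1 / c) := (mul_one_div_cancel hc.ne').symm
    _ ≤ c * ⌈1 / c⌉₊ := by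
      gcongr
      exact Nat.le_ceil _

lemma ceil_one_div_mul_lt {K k : ℕ} {c : ℝ} (hk : 1 ≤ k) (hc : 0 < c)
    (hK : (2 + 1 / c) * (k : ℝ) ≤ K) : ⌈1 / c⌉₊ * k < K := by
  have hceil : (⌈1 / c⌉₊ : ℝ) < 1 / c + 1 := Nat.ceil_lt_add_one (by positivity)
  have hk₀ : (0 : ℝ) < k := by exact_mod_cast hk
  have hlt : (⌈1 / c⌉₊ : ℝ) * k < K :=
    calc (⌈1 / c⌉₊ : ℝ) * k < (2 + 1 / c) * k := mul_lt_mul_of_pos_right (by linarith) hk₀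
      _ ≤ K := hK
  exact_mod_cast hlt

lemma ncard_le_card_rpow_pow_ceil [Fintype V] {c : ℝ} (hV : (1 : ℝ) ≤ Fintype.card V)
    (hc : 0 < c) (s : Set V) : (s.ncard : ℝ) ≤ ((Fintype.card V : ℝ) ^ c) ^ ⌈1 / c⌉₊ := by
  refine le_trans ?_ (le_rpow_pow_ceil_one_div hV hc)
  rw [← Nat.card_eq_fintype_card]
  exact_mod_cast Set.ncard_le_card s

lemma IsLevelling.one_le_card [Fintype V] {G : SimpleGraph V} {L : ℕ → Set V} {k : ℕ}
    (hL : IsLevelling G L k) : (1 : ℝ) ≤ Fintype.card V := by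
  obtain ⟨x, -⟩ := Set.ncard_eq_one.1 hL.2.1
  exact_mod_cast Fintype.card_pos_iff.2 ⟨x⟩

section Extension

variable [Finite V] {G : SimpleGraph V} {m k : ℕ} {γ δ lam η g : ℝ} {I : Finset ℤ}
  {A : ℤ → Set V}

lemma exists_subset_half_mul_ncard_le {ι : Type*} [LinearOrder ι] {J : Finset ι} {C : ι → Set V}
    {B : Set V} {q : ι → ℤ} (hA : IsBlockade I A) (hdiv : ¬ Divergent G I A γ δ)
    (hγ : 0 ≤ γ) (hδ : 0 < δ) (hlam : 0 ≤ lam) (hg : 1 ≤ g) (hmk : m * k < J.card)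
    (hAg : ∀ i ∈ I, ((A i).ncard : ℝ) ≤ g ^ m)
    (hη : (J.card : ℝ) ^ (k + 1) * δ * g + lam + γ ≤ η / 2)
    (hq : ∀ j ∈ J, q j ∈ I) (hqC : ∀ j ∈ J, C j ⊆ A (q j)) (hinj : Set.InjOn q J)
    (hsize : ∀ j ∈ J, η * (A (q j)).ncard ≤ (C j).ncard) (hcov : ∀ j ∈ J, Covers G B (C j))
    (hdeg : ∀ v ∈ B, ∀ j ∈ J, ((G.neighborSet v ∩ C j).ncard : ℝ) ≤ lam * (A (q j)).ncard) :
    ∃ h ∈ J, ∃ S ⊆ J, S.card = k ∧ (∀ i ∈ S, h < i) ∧ ∃ N ⊆ B, ∀ i ∈ S,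
      1 / 2 * ((C i).ncard : ℝ) ≤ (nbhd G (nbhd G N ∩ C h) ∩ (C i \ nbhd G N)).ncard := by
  obtain ⟨j₀, hj₀⟩ : J.Nonempty := Finset.card_pos.1 (by omega)
  have hα (j : ι) (hj : j ∈ J) : 0 < ((A (q j)).ncard : ℝ) := by
    exact_mod_cast (hA.1 _ (hq j hj)).ncard_pos
  have hpos : 0 < (J.card : ℝ) ^ (k + 1) * δ * g := by
    have hJ : 0 < (J.card : ℝ) := by exact_mod_cast Finset.card_pos.2 ⟨j₀, hj₀⟩
    positivity
  have hη₁ : η ≤ 1 := by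
    have hle : ((C j₀).ncard : ℝ) ≤ (A (q j₀)).ncard := by
      exact_mod_cast Set.ncard_le_ncard (hqC j₀ hj₀)
    exact le_of_mul_le_mul_right (by linarith [hsize j₀ hj₀]) (hα j₀ hj₀)
  have hbig (j : ι) (hj : j ∈ J) :
      (J.card : ℝ) ^ (k + 1) * (δ * g * (A (q j)).ncard) < (C j).ncard :=
    calc (J.card : ℝ) ^ (k + 1) * (δ * g * (A (q j)).ncard)
        = (J.card : ℝ) ^ (k + 1) * δ * g * (A (q j)).ncard := by ring
      _ < η * (A (q j)).ncard := mul_lt_mul_of_pos_right (by linarith) (hα j hj)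
      _ ≤ (C j).ncard := hsize j hj
  obtain ⟨h, hh, S, hSJ, hcard, hlt, N, hN, hhead, htail⟩ :=
    exists_subset_le_ncard_nbhd_and_ncard_nbhd_le hmk hg hδ (by linarith) hα
      (fun j hj => hAg _ (hq j hj)) hcov hdeg hbig
  refine ⟨h, hh, S, hSJ, hcard, hlt, N, hN, fun i hi => ?_⟩
  have hlost : (((C i \ nbhd G N) \ nbhd G (nbhd G N ∩ C h)).ncard : ℝ) <
      γ * (A (q i)).ncard :=
    ncard_sdiff_nbhd_lt hdiv (hq i (hSJ hi)) (hq h hh) (hinj.ne (hSJ hi) hh (hlt i hi).ne')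
      (Set.sdiff_subset.trans (hqC i (hSJ hi))) (Set.inter_subset_right.trans (hqC h hh)) hhead
  exact half_mul_ncard_le_ncard_inter_sdiff (htail i hi) hlost.le (hα i (hSJ hi)).le hη
    (hsize i (hSJ hi))

theorem statement_14_general (hγ : 0 ≤ γ) (hδ : 0 < δ) (hlam : 0 ≤ lam) (hg : 1 ≤ g)
    (hA : IsBlockade I A) (hAg : ∀ i ∈ I, ((A i).ncard : ℝ) ≤ g ^ m)
    (hlink : LinkageLE G I A lam) (hdiv : ¬ Divergent G I A γ δ)
    {L M : ℕ → Set V} {a b : ℕ} {J : Finset ℤ} {C : ℤ → Set V} (hmk : m * k < J.card)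
    (hη : (J.card : ℝ) ^ (k + 1) * δ * g + lam + γ ≤ η / 2)
    (hbl : IsBiLevelling G L a M b J C) (hrb : RainbowBiLevelling I A L a M b J C)
    (hsize : SizeGE I A J C η) :
    ∃ (L' : ℕ → Set V) (a' : ℕ) (M' : ℕ → Set V) (b' : ℕ)
      (J' : Finset ℤ) (C' : ℤ → Set V),
      IsBiLevelling G L' a' M' b' J' C' ∧ RainbowBiLevelling I A L' a' M' b' J' C' ∧
      J'.card = k ∧ a' + b' = a + b + 1 ∧
      (∃ r : ℤ → ℤ, (∀ j ∈ J', r j ∈ J ∧ C' j ⊆ C (r j)) ∧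
        ∀ j ∈ J', ∀ j' ∈ J', r j = r j' → j = j') ∧
      SizeGE J C J' C' (1/2) := by
  have ⟨qc, _, qm, hqc, _, hqm, hinj, _, _, _, hcm, _⟩ := hrb
  have ⟨hC, _, hM, _, hMC, _⟩ := hbl
  have hcov := covers_biUnion.1 ((reaches_iff hM).1 hMC).2.1
  have hdeg (v : V) (hv : v ∈ M b) (j : ℤ) (hj : j ∈ J) :
      ((G.neighborSet v ∩ C j).ncard : ℝ) ≤ lam * (A (qc j)).ncard := by
    obtain ⟨hb, hMb⟩ := hqm b hM.1 le_rfl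
    refine le_trans ?_ (hlink _ hb _ (hqc j hj).1 (hcm j hj b hM.1 le_rfl).symm v (hMb hv))
    exact_mod_cast Set.ncard_le_ncard (Set.inter_subset_inter_right _ (hqc j hj).2)
  obtain ⟨h, hh, S, hSJ, hcard, hlt, N, hN, hhalf⟩ := exists_subset_half_mul_ncard_le hA hdiv
    hγ hδ hlam hg hmk hAg hη (fun j hj => (hqc j hj).1) (fun j hj => (hqc j hj).2)
    (fun i hi j hj => hinj i hi j hj) (fun j hj => hsize j hj _ (hqc j hj).1 (hqc j hj).2) hcov
    hdeg
  set X := nbhd G N ∩ C h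
  set C' : ℤ → Set V := fun i => nbhd G X ∩ (C i \ nbhd G N)
  have hsub (i : ℤ) (_ : i ∈ S) : C' i ⊆ C i := Set.inter_subset_right.trans Set.sdiff_subset
  have hne (i : ℤ) (hi : i ∈ S) : (C' i).Nonempty := by
    have hpos : 0 < ((C i).ncard : ℝ) := by exact_mod_cast (hC.1 i (hSJ hi)).ncard_pos
    refine (Set.ncard_pos).1 ?_
    exact_mod_cast (by positivity : 0 < 1 / 2 * ((C i).ncard : ℝ)).trans_le (hhalf i hi)
  refine ⟨_, a, _, b + 1, S, C', hbl.extend hh hSJ hlt hN Set.inter_subset_right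
    (covers_nbhd_inter G N _) hne hsub (fun i _ => ?_) (fun i _ => covers_nbhd_inter G X _),
    hrb.extend hh hSJ (fun hhS => (hlt h hhS).false) Set.sdiff_subset hN Set.inter_subset_right
    hsub, hcard, by omega, ⟨id, fun i hi => ⟨hSJ hi, hsub i hi⟩, fun _ _ _ _ => id⟩,
    sizeGE_of_subset hC hSJ hne hsub hhalf⟩
  exact (anticomplete_sdiff_nbhd G N (C i)).mono subset_rfl Set.inter_subset_right

end Extension

/-- extending a bi-levelling, increasing its height by one. -/
theorem statement_14 {V : Type} [Fintype V] (G : SimpleGraph V)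
    (K k : ℕ) (hk : 1 ≤ k) (hKk : k ≤ K)
    (γ δ lam η c : ℝ) (hγ : 0 < γ) (hδ : 0 < δ) (hlam : 0 < lam) (hη : 0 < η)
    (hc : 0 < c) (hK : (2 + 1/c) * (k : ℝ) ≤ (K : ℝ))
    (I : Finset ℤ) (A : ℤ → Set V) (hA : IsBlockade I A)
    (hlink : LinkageLE G I A lam) (hdiv : ¬ Divergent G I A γ δ)
    (hη2 : (K : ℝ) ^ (k + 1) * δ * (Fintype.card V : ℝ) ^ c + lam + γ ≤ η / 2)
    (L : ℕ → Set V) (a : ℕ) (M : ℕ → Set V) (b : ℕ) (J : Finset ℤ) (C : ℤ → Set V)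
    (hbl : IsBiLevelling G L a M b J C) (hrb : RainbowBiLevelling I A L a M b J C)
    (hlenC : J.card = K) (hsize : SizeGE I A J C η) :
    ∃ (L' : ℕ → Set V) (a' : ℕ) (M' : ℕ → Set V) (b' : ℕ)
      (J' : Finset ℤ) (C' : ℤ → Set V),
      IsBiLevelling G L' a' M' b' J' C' ∧ RainbowBiLevelling I A L' a' M' b' J' C' ∧
      J'.card = k ∧ a' + b' = a + b + 1 ∧
      (∃ r : ℤ → ℤ, (∀ j ∈ J', r j ∈ J ∧ C' j ⊆ C (r j)) ∧
        ∀ j ∈ J', ∀ j' ∈ J', r j = r j' → j = j') ∧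
      SizeGE J C J' C' (1/2) := by
  subst hlenC
  have hV : (1 : ℝ) ≤ Fintype.card V := hbl.2.1.one_le_card
  exact statement_14_general hγ.le hδ hlam.le (Real.one_le_rpow hV hc.le) hA
    (fun i _ => ncard_le_card_rpow_pow_ceil hV hc (A i)) hlink hdiv
    (ceil_one_div_mul_lt hk hc hK) hη2 hbl hrb hsize

end PurePairs
end
end
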